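/- There exists δ_0 > 0, and for every sub-exponential weight ρ there exist C_ρ, θ_ρ > 0, such that: for every u_0 ∈ C^1(ℝ;ℝ) such that (u_0 − ū)/Ω_{κ⁺}^+ and (u_0 − ū)'/Ω_{κ⁺}^+ are bounded and uniformly continuous on ℝ, E_{0,κ⁺} := ‖u_0 − ū‖_{W^{1,∞}_{κ⁺,+}} ≤ δ_0, and E_0^{[ρ]} := ‖u_0 − ū‖_{W^{1,∞}_{+,ρ}} < ∞, the unique global classical solution u ∈ C^1([0,∞)×ℝ;ℝ) of ∂_t u + f'(u)·∂_x u = g(u) with u(0,·) = u_0 satisfies ‖u(t, · + σt) − ū‖_{W^{1,∞}_{κ⁺,+}} ≤ C_ρ·E_0^{[ρ]}·ρ(θ_ρ·t) for all t ≥ 0. -/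

import Mathlib

/-!
The proof follows characteristics in the frame moving with speed `σ`. Write `a = σ - f'`. A
characteristic `(X, W)` solves `X' = -a(W)`, `W' = g(W)`; the solution has value `W` there, and its
slope `p` solves `p' = m p` with `m = a'(W) p + g'(W)` (`char_value`, `char_deriv`). The quantity
`n = g(W) + a(W) p`, which vanishes identically on the front by the profile equation, solves the same
equation `n' = m n`. As `u_-` is stable, `a > 0` along the front (`speed_pos`), so characteristics
near the front move to the left with a speed at least `a0 > 0`. Through each `(t, x)` passes a
characteristic issued from the initial graph at some foot `x0` (`exists_flow`).

If `x0` is far behind the front, then `W`, `p` and `n` stay in a neighbourhood of the stable state,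
where `g' < 0` and `m < 0`; the perturbation decays exponentially in time (`rear_decay`).

Otherwise, the perturbation at `x0` is small compared with `|ub'(x0)|`, because `ub'` decays exactly
like `e^{-κx}` (`front_bounds`) and this is the weight in which the perturbation is measured. By the
intermediate value theorem, the initial point lies on the translate of the front by some small `ψ`
(`exists_shift`), and by uniqueness the characteristic stays on that translate (`shift_lock`). Since
`p` and `n` solve the same linear equation, they stay proportional, and this controls `p` relative to
`ub'` (`front_transport`). Hence the ratio of the perturbation to `|ub'|` is propagated, up to a
constant, from `x0` to `x ≤ x0 - a0 t`. Both cases are collected in `pointwise`.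

The localization of the data bounds that ratio by a multiple of `ρ(max(x0, 0))`. If `x ≥ -a0 t/2`,
then `x0 ≥ a0 t/2`, and `ρ` being nonincreasing yields a factor `ρ(θ t)`. If `x ≤ -a0 t/2`, then
`|ub'(x)|` is itself exponentially small in time. Exponential factors in time are absorbed by
`ρ(θ t)` for small `θ`, thanks to the exponential lower bound on `ρ`.
-/

open Filter Set Function

/-- The weighted `W^{1,∞}` norm `‖v‖_{W^{1,∞}_{κ,+}} = sup_x max(|v x|, |v' x|)/Ω_κ^+(x)`,
where `Ω_κ^+(x) = exp(−κ·max(x,0))`. -/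
noncomputable def wNorm (κ : ℝ) (v : ℝ → ℝ) : ℝ :=
  ⨆ x : ℝ, max |v x| |deriv v x| / Real.exp (-(κ * max x 0))

/-- The `ρ`-weighted norm `‖v‖_{W^{1,∞}_{+,ρ}} = sup_x max(|v x|, |v' x|)/(ρ^+(x)·Ω_{κ}^+(x))`,
with `ρ^+(x) = ρ(max(x,0))`. -/
noncomputable def wNormW (κ : ℝ) (ρ : ℝ → ℝ) (v : ℝ → ℝ) : ℝ :=
  ⨆ x : ℝ, max |v x| |deriv v x| / (ρ (max x 0) * Real.exp (-(κ * max x 0)))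

/-- Bounded and uniformly continuous real function on `ℝ`. -/
def IsBUC (h : ℝ → ℝ) : Prop :=
  (∃ M, ∀ x, |h x| ≤ M) ∧ UniformContinuous h

/-- A sub-exponential weight: positive, nonincreasing, tending to `0` at `+∞`,
bounded below by a decaying exponential, and satisfying the convolution bound
`∫_0^t e^{−ω(t−s)} ρ(s) ds ≤ C ρ(t)`. -/
def IsSubExpWeight (ρ : ℝ → ℝ) : Prop :=
  (∀ t, 0 ≤ t → 0 < ρ t) ∧
  (∀ s t, 0 ≤ s → s ≤ t → ρ t ≤ ρ s) ∧
  Tendsto ρ atTop (nhds 0) ∧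
  (∃ C > (0:ℝ), ∃ ω > (0:ℝ), ∀ t, 0 ≤ t → C * Real.exp (-ω * t) ≤ ρ t) ∧
  (∃ C > (0:ℝ), ∃ ω > (0:ℝ), ∀ t, 0 ≤ t →
    (∫ s in (0:ℝ)..t, Real.exp (-ω * (t - s)) * ρ s) ≤ C * ρ t)

/-- `u : [0,∞) × ℝ → ℝ` is a global classical (`C¹`) solution of
`∂_t u + f'(u) ∂_x u = g(u)` with initial datum `u0`. -/
def IsClassicalSol (f g : ℝ → ℝ) (u0 : ℝ → ℝ) (u : ℝ → ℝ → ℝ) : Prop :=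
  ContDiffOn ℝ 1 (uncurry u) (Ici (0:ℝ) ×ˢ (univ : Set ℝ)) ∧
  (∀ x, u 0 x = u0 x) ∧
  ∀ t, 0 ≤ t → ∀ x : ℝ,
    derivWithin (fun s => u s x) (Ici (0:ℝ)) t
      + deriv f (u t x) * deriv (u t) x = g (u t x)

/-! ### Differential inequalities on `[0, T]` -/

lemma hasDeriv_Ici {E : Type*} [NormedAddCommGroup E] [NormedSpace ℝ E] {y : ℝ → E} {d : E}
    {T s : ℝ} (hs : s ∈ Ico 0 T)
    (h : HasDerivWithinAt y d (Icc 0 T) s) : HasDerivWithinAt y d (Ici s) s := by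
  have h1 : HasDerivWithinAt y d (Icc s T) s := h.mono (Icc_subset_Icc_left hs.1)
  exact h1.mono_of_mem_nhdsWithin (Icc_mem_nhdsGE hs.2)

/-- Version of `decay` with a strict bound `b > |y 0|`, so that `y²` can be compared with the
supersolution `b² e^{-cs}`, whose slope strictly dominates at a first contact point. -/
lemma decay_aux {y y' : ℝ → ℝ} {T c ε : ℝ} (hc : 0 < c)
    (hy : ∀ s ∈ Icc 0 T, HasDerivWithinAt y (y' s) (Icc 0 T) s)
    (h : ∀ s ∈ Icc 0 T, |y s| ≤ ε → y s * y' s ≤ -c * (y s) ^ 2)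
    {b : ℝ} (hb : |y 0| < b) (hbε : b ≤ ε) :
    ∀ s ∈ Icc 0 T, |y s| ≤ b * Real.exp (-(c / 2) * s) := by
  intro s hs
  have hb0 : 0 < b := lt_of_le_of_lt (abs_nonneg _) hb
  have key := image_le_of_deriv_right_lt_deriv_boundary' (f := fun s => y s ^ 2)
    (f' := fun s => 2 * (y s * y' s)) (a := 0) (b := T)
    (B := fun s => b ^ 2 * Real.exp (-c * s)) (B' := fun s => b ^ 2 * (Real.exp (-c * s) * -c))
    (fun s hs => ((hy s hs).continuousWithinAt).pow 2)
    (fun s hs => by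
      have := (hasDeriv_Ici hs (hy s (Ico_subset_Icc_self hs))).pow 2
      exact this.congr_deriv (by norm_num; ring))
    (by
      simp only [mul_zero, Real.exp_zero, mul_one]
      exact sq_le_sq' (by linarith [neg_abs_le (y 0)]) (by linarith [le_abs_self (y 0)]))
    (by fun_prop)
    (fun s hs => by
      have := ((hasDerivAt_id s).const_mul (-c)).exp.const_mul (b ^ 2)
      simpa using this.hasDerivWithinAt)
    (fun s hs heq => by
      have hs' := Ico_subset_Icc_self hs
      have hp : 0 < b ^ 2 * Real.exp (-c * s) := by positivity
      have hle : |y s| ≤ ε := by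
        refine abs_le_of_sq_le_sq' ?_ (hb0.le.trans hbε) |> abs_le.mpr
        have e1 : Real.exp (-c * s) ≤ 1 := Real.exp_le_one_iff.mpr (by nlinarith [hs.1])
        have : b ^ 2 ≤ ε ^ 2 := by gcongr
        nlinarith [sq_nonneg b]
      have := h s hs' hle
      rw [heq] at this
      nlinarith) hs
  refine abs_le_of_sq_le_sq' ?_ (by positivity) |> abs_le.mpr
  rw [mul_pow, ← Real.exp_nat_mul]
  have e : ((2 : ℕ) : ℝ) * (-(c / 2) * s) = -c * s := by push_cast; ring
  rw [e]
  exact key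

/-- Exponential decay from a differential inequality which is only available as long as
`|y| ≤ ε`: the inequality itself prevents `y` from leaving this region. -/
lemma decay {y y' : ℝ → ℝ} {T c ε : ℝ} (hc : 0 < c)
    (hy : ∀ s ∈ Icc 0 T, HasDerivWithinAt y (y' s) (Icc 0 T) s)
    (h : ∀ s ∈ Icc 0 T, |y s| ≤ ε → y s * y' s ≤ -c * (y s) ^ 2)
    (h0 : |y 0| < ε) :
    ∀ s ∈ Icc 0 T, |y s| ≤ |y 0| * Real.exp (-(c / 2) * s) := by
  intro s hs
  have ht : Tendsto (fun b => b * Real.exp (-(c / 2) * s)) (nhdsWithin |y 0| (Ioi |y 0|))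
      (nhds (|y 0| * Real.exp (-(c / 2) * s))) :=
    (Continuous.tendsto (by fun_prop) _).mono_left nhdsWithin_le_nhds
  refine ge_of_tendsto ht ?_
  filter_upwards [Ioc_mem_nhdsGT h0] with b hb
  exact decay_aux hc hy h hb.1 hb.2 s hs

lemma eq_zero_of_gronwall {y y' : ℝ → ℝ} {T K : ℝ}
    (hy : ∀ s ∈ Icc 0 T, HasDerivWithinAt y (y' s) (Icc 0 T) s)
    (h : ∀ s ∈ Icc 0 T, |y' s| ≤ K * |y s|) (h0 : y 0 = 0) :
    ∀ s ∈ Icc 0 T, y s = 0 := by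
  intro s hs
  have := norm_le_gronwallBound_of_norm_deriv_right_le (f := y) (f' := y') (δ := 0) (K := K)
    (ε := 0) (a := 0) (b := T) (fun s hs => (hy s hs).continuousWithinAt)
    (fun s hs => hasDeriv_Ici hs (hy s (Ico_subset_Icc_self hs))) (by simp [h0])
    (fun s hs => by simpa using h s (Ico_subset_Icc_self hs)) s hs
  rw [gronwallBound_ε0_δ0] at this
  simpa using this

/-! ### Characteristics of the truncated equation -/

/-- Through every point `(T, x)` passes a characteristic `(X, W)` of the equation in the moving
frame, issued from the graph of `u0`. The coefficients are globally bounded and Lipschitz, so the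
forward flow exists; its position component is continuous in the starting point and at bounded
distance from the identity, hence surjective. -/
lemma exists_flow {A G : ℝ → ℝ} {L M : ℝ}
    (hAL : ∀ v w, |A v - A w| ≤ L * |v - w|) (hGL : ∀ v w, |G v - G w| ≤ L * |v - w|)
    (hAM : ∀ v, |A v| ≤ M) (hGM : ∀ v, |G v| ≤ M)
    {u0 : ℝ → ℝ} (hu0 : Continuous u0) {T : ℝ} (hT : 0 ≤ T) (x : ℝ) :
    ∃ X W : ℝ → ℝ, W 0 = u0 (X 0) ∧ X T = x ∧
      (∀ s ∈ Icc 0 T, HasDerivWithinAt X (-A (W s)) (Icc 0 T) s) ∧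
      (∀ s ∈ Icc 0 T, HasDerivWithinAt W (G (W s)) (Icc 0 T) s) := by
  have hL : 0 ≤ L := by
    have := (abs_nonneg _).trans (hAL 1 0)
    simpa using this
  have hM : 0 ≤ M := (abs_nonneg _).trans (hAM 0)
  set V : ℝ × ℝ → ℝ × ℝ := fun z => (-A z.2, G z.2) with hV
  have hVL : LipschitzWith ⟨L, hL⟩ V := by
    refine LipschitzWith.of_dist_le_mul fun z w => ?_
    have h2 : |z.2 - w.2| ≤ dist z w := by
      rw [Prod.dist_eq, ← Real.dist_eq]; exact le_max_right _ _
    have h3 : L * |z.2 - w.2| ≤ L * dist z w := mul_le_mul_of_nonneg_left h2 hL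
    rw [Prod.dist_eq]
    refine max_le ?_ ?_
    · simp only [hV, Real.dist_eq]
      rw [show -A z.2 - -A w.2 = -(A z.2 - A w.2) by ring, abs_neg]
      exact (hAL _ _).trans h3
    · simp only [hV, Real.dist_eq]
      exact (hGL _ _).trans h3
  have hVM : ∀ z, ‖V z‖ ≤ M := fun z => by
    rw [Prod.norm_def]
    exact max_le (by simpa [hV] using hAM z.2) (by simpa [hV] using hGM z.2)
  have hex : ∀ x0 : ℝ, ∃ α : ℝ → ℝ × ℝ, α 0 = (x0, u0 x0) ∧
      ∀ s ∈ Icc 0 T, HasDerivWithinAt α (V (α s)) (Icc 0 T) s := by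
    intro x0
    have hPL : IsPicardLindelof (fun _ => V) (tmin := 0) (tmax := T) ⟨0, by simp [hT]⟩
        (x0, u0 x0) ⟨M * T, by positivity⟩ 0 ⟨M, hM⟩ ⟨L, hL⟩ := by
      apply IsPicardLindelof.of_time_independent
      · intro z _; exact hVM z
      · exact hVL.lipschitzOnWith
      · simp only [sub_zero, sub_self, max_eq_left hT, NNReal.coe_zero]
        exact le_rfl
    exact hPL.exists_eq_forall_mem_Icc_hasDerivWithinAt₀
  choose α hα0 hα using hex
  have hfst : ∀ x0, ∀ s ∈ Icc 0 T,
      HasDerivWithinAt (fun s => (α x0 s).1) (-A (α x0 s).2) (Icc 0 T) s := fun x0 s hs =>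
    (hα x0 s hs).fst
  have hsnd : ∀ x0, ∀ s ∈ Icc 0 T,
      HasDerivWithinAt (fun s => (α x0 s).2) (G (α x0 s).2) (Icc 0 T) s := fun x0 s hs =>
    (hα x0 s hs).snd
  have hmove : ∀ x0, |(α x0 T).1 - x0| ≤ M * T := by
    intro x0
    have := norm_image_sub_le_of_norm_deriv_le_segment' (hfst x0) (C := M)
      (fun s _ => by simpa using hAM _) T ⟨hT, le_rfl⟩
    simpa [hα0] using this
  have hcont : Continuous fun x0 => (α x0 T).1 := by
    refine continuous_fst.comp ?_
    rw [continuous_iff_continuousAt]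
    intro x1
    rw [ContinuousAt, tendsto_iff_dist_tendsto_zero]
    have hb : ∀ x0, dist (α x0 T) (α x1 T)
        ≤ dist (x0, u0 x0) (x1, u0 x1) * Real.exp (L * (T - 0)) := by
      intro x0
      exact dist_le_of_trajectories_ODE (v := fun _ => V) (K := ⟨L, hL⟩) (a := 0) (b := T)
        (fun _ => hVL) (fun s hs => (hα x0 s hs).continuousWithinAt)
        (fun s hs => hasDeriv_Ici hs (hα x0 s (Ico_subset_Icc_self hs)))
        (fun s hs => (hα x1 s hs).continuousWithinAt)
        (fun s hs => hasDeriv_Ici hs (hα x1 s (Ico_subset_Icc_self hs)))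
        (by rw [hα0, hα0]) T ⟨hT, le_rfl⟩
    have hc : Continuous fun x0 => dist (x0, u0 x0) (x1, u0 x1) * Real.exp (L * (T - 0)) := by
      fun_prop
    have := hc.tendsto x1
    simp only [dist_self, zero_mul] at this
    exact squeeze_zero (fun _ => dist_nonneg) hb this
  have hIVT := intermediate_value_Icc (show x - M * T ≤ x + M * T by nlinarith [mul_nonneg hM hT])
    hcont.continuousOn
  obtain ⟨x0, -, hx0⟩ := hIVT (show x ∈ _ from
    ⟨by linarith [(abs_le.mp (hmove (x - M * T))).2], by
      linarith [(abs_le.mp (hmove (x + M * T))).1]⟩)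
  exact ⟨fun s => (α x0 s).1, fun s => (α x0 s).2, by simp [hα0], hx0, hfst x0, hsnd x0⟩

/-! ### Classical solutions along characteristics -/

lemma exists_lip {h : ℝ → ℝ} (hh : ContDiff ℝ 1 h) (N : ℝ) :
    ∃ L, 0 ≤ L ∧ ∀ v w, |v| ≤ N → |w| ≤ N → |h v - h w| ≤ L * |v - w| := by
  obtain ⟨L, hL⟩ := (isCompact_Icc (a := -N) (b := N)).exists_bound_of_continuousOn
    (hh.continuous_deriv le_rfl).continuousOn
  refine ⟨max L 0, le_max_right _ _, fun v w hv hw => ?_⟩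
  exact Convex.norm_image_sub_le_of_norm_deriv_le (s := Icc (-N) N)
    (fun x _ => (hh.differentiable one_ne_zero).differentiableAt)
    (fun x hx => (hL x hx).trans (le_max_left _ _)) (convex_Icc _ _)
    (abs_le.mp hw) (abs_le.mp hv)

lemma exists_bdd {h : ℝ → ℝ} (hh : Continuous h) (N : ℝ) :
    ∃ L, 0 ≤ L ∧ ∀ v, |v| ≤ N → |h v| ≤ L := by
  obtain ⟨L, hL⟩ := (isCompact_Icc (a := -N) (b := N)).exists_bound_of_continuousOn
    hh.continuousOn
  exact ⟨max L 0, le_max_right _ _, fun v hv => (hL v (abs_le.mp hv)).trans (le_max_left _ _)⟩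

/-- A classical solution has a continuous space derivative `ux`, and its derivative along an
arbitrary curve `Y` of velocity `d` is `g(u) + (d - f'(u)) ux`. -/
lemma pde_facts {f g u0 : ℝ → ℝ} {u : ℝ → ℝ → ℝ} (hu : IsClassicalSol f g u0 u) :
    ∃ ux : ℝ → ℝ → ℝ, ContinuousOn (uncurry ux) (Ici (0:ℝ) ×ˢ (univ : Set ℝ)) ∧
      (∀ t, 0 ≤ t → ∀ x, HasDerivAt (u t) (ux t x) x) ∧
      ∀ (T : ℝ) (Y : ℝ → ℝ) (d s : ℝ), s ∈ Icc 0 T → HasDerivWithinAt Y d (Icc 0 T) s →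
        HasDerivWithinAt (fun r => u r (Y r))
          (g (u s (Y s)) + (d - deriv f (u s (Y s))) * ux s (Y s)) (Icc 0 T) s := by
  obtain ⟨hC, -, hpde⟩ := hu
  set S : Set (ℝ × ℝ) := Ici (0:ℝ) ×ˢ (univ : Set ℝ) with hS
  have hSu : UniqueDiffOn ℝ S := (uniqueDiffOn_Ici 0).prod uniqueDiffOn_univ
  set D := fderivWithin ℝ (uncurry u) S with hD
  have hDc : ContinuousOn D S := hC.continuousOn_fderivWithin hSu le_rfl
  have hDd : ∀ t, 0 ≤ t → ∀ x, HasFDerivWithinAt (uncurry u) (D (t, x)) S (t, x) := fun t ht x =>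
    ((hC.differentiableOn one_ne_zero) (t, x) ⟨ht, mem_univ _⟩).hasFDerivWithinAt
  have hx : ∀ t, 0 ≤ t → ∀ x, HasDerivAt (u t) (D (t, x) (0, 1)) x := by
    intro t ht x
    have h1 : HasDerivWithinAt (fun y : ℝ => (t, y)) ((0:ℝ), (1:ℝ)) univ x :=
      (hasDerivWithinAt_const x univ t).prodMk (hasDerivWithinAt_id x univ)
    have := (hDd t ht x).comp_hasDerivWithinAt x h1
      (show MapsTo (fun y : ℝ => ((t, y) : ℝ × ℝ)) univ S from fun y _ => ⟨ht, mem_univ _⟩)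
    rw [hasDerivWithinAt_univ] at this
    exact this
  have htt : ∀ t, 0 ≤ t → ∀ x, derivWithin (fun s => u s x) (Ici 0) t = D (t, x) (1, 0) := by
    intro t ht x
    have h1 : HasDerivWithinAt (fun s : ℝ => (s, x)) ((1:ℝ), (0:ℝ)) (Ici 0) t :=
      (hasDerivWithinAt_id t _).prodMk (hasDerivWithinAt_const t _ x)
    have := (hDd t ht x).comp_hasDerivWithinAt t h1
      (show MapsTo (fun s : ℝ => ((s, x) : ℝ × ℝ)) (Ici 0) S from fun y hy => ⟨hy, mem_univ _⟩)
    exact this.derivWithin ((uniqueDiffOn_Ici 0) t ht)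
  refine ⟨fun t x => D (t, x) (0, 1), ?_, hx, ?_⟩
  · exact hDc.clm_apply continuousOn_const
  · intro T Y d s hs hY
    have h1 : HasDerivWithinAt (fun r : ℝ => (r, Y r)) ((1:ℝ), d) (Icc 0 T) s :=
      (hasDerivWithinAt_id s _).prodMk hY
    have := (hDd s hs.1 (Y s)).comp_hasDerivWithinAt s h1
      (show MapsTo (fun r : ℝ => ((r, Y r) : ℝ × ℝ)) (Icc 0 T) S from
        fun y hy => ⟨hy.1, mem_univ _⟩)
    refine this.congr_deriv ?_
    have e : ((1:ℝ), d) = ((1:ℝ), (0:ℝ)) + d • ((0:ℝ), (1:ℝ)) := by simp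
    rw [e, map_add, map_smul, ← htt s hs.1, smul_eq_mul]
    have h2 := hpde s hs.1 (Y s)
    rw [(hx s hs.1 (Y s)).deriv] at h2
    linarith

/-- A classical solution is carried by the characteristics: the difference `u(s, Y s) - W s`
satisfies a linear differential inequality and vanishes initially. -/
lemma char_value {f g u0 : ℝ → ℝ} {u : ℝ → ℝ → ℝ} (hu : IsClassicalSol f g u0 u)
    (hf : ContDiff ℝ 1 (deriv f)) (hg : ContDiff ℝ 1 g) {T : ℝ} {Y W : ℝ → ℝ}
    (hY : ∀ s ∈ Icc 0 T, HasDerivWithinAt Y (deriv f (W s)) (Icc 0 T) s)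
    (hW : ∀ s ∈ Icc 0 T, HasDerivWithinAt W (g (W s)) (Icc 0 T) s)
    (h0 : W 0 = u0 (Y 0)) : ∀ s ∈ Icc 0 T, u s (Y s) = W s := by
  obtain ⟨ux, huxc, -, hch⟩ := pde_facts hu
  have hYc : ContinuousOn Y (Icc 0 T) := fun s hs => (hY s hs).continuousWithinAt
  have hWc : ContinuousOn W (Icc 0 T) := fun s hs => (hW s hs).continuousWithinAt
  have hpc : ContinuousOn (fun s => ((s, Y s) : ℝ × ℝ)) (Icc 0 T) :=
    continuousOn_id.prodMk hYc
  have hmaps : MapsTo (fun s => ((s, Y s) : ℝ × ℝ)) (Icc 0 T) (Ici (0:ℝ) ×ˢ univ) :=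
    fun s hs => ⟨hs.1, mem_univ _⟩
  obtain ⟨B, hB⟩ := isCompact_Icc.exists_bound_of_continuousOn (huxc.comp hpc hmaps)
  obtain ⟨N1, hN1⟩ := isCompact_Icc.exists_bound_of_continuousOn (hu.1.continuousOn.comp hpc hmaps)
  obtain ⟨N2, hN2⟩ := isCompact_Icc.exists_bound_of_continuousOn hWc
  simp only [comp, uncurry, Real.norm_eq_abs] at hB hN1 hN2
  obtain ⟨L1, hL1, hL1'⟩ := exists_lip hf (max N1 N2)
  obtain ⟨L2, hL2, hL2'⟩ := exists_lip hg (max N1 N2)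
  have key := eq_zero_of_gronwall (y := fun s => u s (Y s) - W s)
    (y' := fun s => (g (u s (Y s)) + (deriv f (W s) - deriv f (u s (Y s))) * ux s (Y s)) - g (W s))
    (K := L2 + L1 * B)
    (fun s hs => (hch T Y _ s hs (hY s hs)).sub (hW s hs)) (fun s hs => by
      have a1 := (hN1 s hs).trans (le_max_left N1 N2)
      have a2 := (hN2 s hs).trans (le_max_right N1 N2)
      have e1 := hL1' _ _ a2 a1
      have e2 := hL2' _ _ a1 a2
      rw [abs_sub_comm (W s)] at e1
      have e3 : |(deriv f (W s) - deriv f (u s (Y s))) * ux s (Y s)|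
          ≤ (L1 * |u s (Y s) - W s|) * B := by
        rw [abs_mul]
        exact mul_le_mul e1 (hB s hs) (abs_nonneg _) (by positivity)
      have e4 := abs_add_le (g (u s (Y s)) - g (W s))
        ((deriv f (W s) - deriv f (u s (Y s))) * ux s (Y s))
      rw [show (g (u s (Y s)) + (deriv f (W s) - deriv f (u s (Y s))) * ux s (Y s)) - g (W s)
        = (g (u s (Y s)) - g (W s)) + (deriv f (W s) - deriv f (u s (Y s))) * ux s (Y s) by ring]
      linarith) (by simp [hu.2.1, h0])
  intro s hs
  linarith [key s hs]

/-- The slope `p = ∂ₓu` of a classical solution solves the Riccati equation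
`p' = -f''(W) p² + g'(W) p` along characteristics. Since `u` is only `C¹`, the equation cannot be
differentiated in `x`: one passes to the limit `h → 0` in the integrated equation for the difference
quotient of `u` between the curves `Y + h` and `Y`. -/
lemma char_deriv {f g u0 : ℝ → ℝ} {u : ℝ → ℝ → ℝ} (hu : IsClassicalSol f g u0 u)
    (hf : ContDiff ℝ 1 (deriv f)) (hg : ContDiff ℝ 1 g) {T : ℝ} {Y W : ℝ → ℝ}
    (hY : ∀ s ∈ Icc 0 T, HasDerivWithinAt Y (deriv f (W s)) (Icc 0 T) s)
    (hW : ∀ s ∈ Icc 0 T, HasDerivWithinAt W (g (W s)) (Icc 0 T) s)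
    (huW : ∀ s ∈ Icc 0 T, u s (Y s) = W s) :
    ∃ p : ℝ → ℝ, (∀ s ∈ Icc 0 T, HasDerivAt (u s) (p s) (Y s)) ∧
      ∀ s ∈ Icc 0 T, HasDerivWithinAt p
        ((-deriv (deriv f) (W s) * p s + deriv g (W s)) * p s) (Icc 0 T) s := by
  obtain ⟨ux, huxc, hux, hch⟩ := pde_facts hu
  refine ⟨fun s => ux s (Y s), fun s hs => hux s hs.1 (Y s), ?_⟩
  have hYc : ContinuousOn Y (Icc 0 T) := fun s hs => (hY s hs).continuousWithinAt
  have hWc : ContinuousOn W (Icc 0 T) := fun s hs => (hW s hs).continuousWithinAt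
  -- the tube around the characteristic on which uniform bounds are taken
  set K : Set (ℝ × ℝ) := Icc 0 T ×ˢ Icc (-1) 1 with hK
  have hKc : IsCompact K := isCompact_Icc.prod isCompact_Icc
  have hpc : ContinuousOn (fun z : ℝ × ℝ => ((z.1, Y z.1 + z.2) : ℝ × ℝ)) K :=
    continuousOn_fst.prodMk ((hYc.comp continuousOn_fst fun z hz => hz.1).add continuousOn_snd)
  have hmaps : MapsTo (fun z : ℝ × ℝ => ((z.1, Y z.1 + z.2) : ℝ × ℝ)) K (Ici (0:ℝ) ×ˢ univ) :=
    fun z hz => ⟨hz.1.1, mem_univ _⟩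
  have huxK := huxc.comp hpc hmaps
  have huK := hu.1.continuousOn.comp hpc hmaps
  obtain ⟨B, hB⟩ := hKc.exists_bound_of_continuousOn huxK
  obtain ⟨N, hN⟩ := hKc.exists_bound_of_continuousOn huK
  simp only [comp, uncurry, Real.norm_eq_abs] at hB hN huxK huK
  obtain ⟨L1, hL1, hL1'⟩ := exists_lip hf N
  obtain ⟨L2, hL2, hL2'⟩ := exists_lip hg N
  have h01 : (0:ℝ) ∈ Icc (-1:ℝ) 1 := by constructor <;> norm_num
  have hslice : ∀ h ∈ Icc (-1:ℝ) 1, ContinuousOn (fun s : ℝ => ((s, h) : ℝ × ℝ)) (Icc 0 T) :=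
    fun h _ => continuousOn_id.prodMk continuousOn_const
  have huxs : ∀ h ∈ Icc (-1:ℝ) 1, ContinuousOn (fun s => ux s (Y s + h)) (Icc 0 T) := fun h hh =>
    huxK.comp (hslice h hh) (fun s hs => ⟨hs, hh⟩)
  have hus : ∀ h ∈ Icc (-1:ℝ) 1, ContinuousOn (fun s => u s (Y s + h)) (Icc 0 T) := fun h hh =>
    huK.comp (hslice h hh) (fun s hs => ⟨hs, hh⟩)
  have hp : ContinuousOn (fun s => ux s (Y s)) (Icc 0 T) := by simpa using huxs 0 h01
  have hlip : ∀ s ∈ Icc 0 T, ∀ h ∈ Icc (-1:ℝ) 1, |u s (Y s + h) - W s| ≤ B * |h| := by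
    intro s hs h hh
    have := Convex.norm_image_sub_le_of_norm_hasDerivWithin_le (s := Icc (-1:ℝ) 1)
      (f := fun k => u s (Y s + k)) (f' := fun k => ux s (Y s + k)) (C := B)
      (fun k _ => ((hux s hs.1 (Y s + k)).comp_const_add (Y s) k).hasDerivWithinAt)
      (fun k hk => hB (s, k) ⟨hs, hk⟩) (convex_Icc _ _) h01 hh
    simpa [huW s hs] using this
  -- the right-hand side `F` of the Riccati equation and its counterpart `R h` for the
  -- difference quotients of step `h`
  set F : ℝ → ℝ := fun s =>
    (-deriv (deriv f) (W s) * ux s (Y s) + deriv g (W s)) * ux s (Y s) with hF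
  have hFc : ContinuousOn F (Icc 0 T) :=
    ((((hf.continuous_deriv le_rfl).comp_continuousOn hWc).neg.mul hp).add
      ((hg.continuous_deriv le_rfl).comp_continuousOn hWc)).mul hp
  set R : ℝ → ℝ → ℝ := fun h s => (g (u s (Y s + h)) - g (W s)
    + (deriv f (W s) - deriv f (u s (Y s + h))) * ux s (Y s + h)) / h with hR
  have hRc : ∀ h ∈ Icc (-1:ℝ) 1, ContinuousOn (R h) (Icc 0 T) := fun h hh =>
    (((hg.continuous.comp_continuousOn (hus h hh)).sub
      (hg.continuous.comp_continuousOn hWc)).add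
      (((hf.continuous.comp_continuousOn hWc).sub
        (hf.continuous.comp_continuousOn (hus h hh))).mul (huxs h hh))).div_const h
  have hRint : ∀ t ∈ Icc 0 T, ∀ h ∈ Icc (-1:ℝ) 1,
      ∫ s in (0:ℝ)..t, R h s = (u t (Y t + h) - u t (Y t)) / h - (u 0 (Y 0 + h) - u 0 (Y 0)) / h := by
    intro t ht h hh
    have hsub : Icc 0 t ⊆ Icc 0 T := Icc_subset_Icc_right ht.2
    have hder : ∀ s ∈ Icc 0 T, HasDerivWithinAt (fun s => (u s (Y s + h) - u s (Y s)) / h)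
        (R h s) (Icc 0 T) s := by
      intro s hs
      have d1 := hch T (fun s => Y s + h) _ s hs ((hY s hs).add_const h)
      have d2 := hch T Y _ s hs (hY s hs)
      refine ((d1.sub d2).div_const h).congr_deriv ?_
      simp only [hR, huW s hs]
      ring
    refine intervalIntegral.integral_eq_sub_of_hasDeriv_right_of_le ht.1
      (fun s hs => ((hder s (hsub hs)).continuousWithinAt).mono hsub) (fun s hs => ?_) ?_
    · have hs' : s ∈ Ico 0 T := ⟨hs.1.le, hs.2.trans_le ht.2⟩
      exact (hasDeriv_Ici hs' (hder s (Ico_subset_Icc_self hs'))).mono Ioi_subset_Ici_self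
    · exact ((hRc h hh).mono hsub).intervalIntegrable_of_Icc ht.1
  have hev : ∀ᶠ h : ℝ in nhdsWithin 0 {0}ᶜ, h ∈ Icc (-1:ℝ) 1 ∧ h ≠ 0 := by
    filter_upwards [self_mem_nhdsWithin, mem_nhdsWithin_of_mem_nhds
      (Icc_mem_nhds (show (-1:ℝ) < 0 by norm_num) (show (0:ℝ) < 1 by norm_num))] with h h1 h2
    exact ⟨h2, h1⟩
  have hRlim : ∀ s ∈ Icc 0 T, Tendsto (fun h => R h s) (nhdsWithin 0 {0}ᶜ) (nhds (F s)) := by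
    intro s hs
    have du : HasDerivAt (fun h => u s (Y s + h)) (ux s (Y s)) 0 := by
      have := (hux s hs.1 (Y s + 0)).comp_const_add (Y s) 0
      simpa using this
    have hW0 : u s (Y s + 0) = W s := by simpa using huW s hs
    have dg : HasDerivAt (fun h => g (u s (Y s + h))) (deriv g (W s) * ux s (Y s)) 0 := by
      refine HasDerivAt.comp (0:ℝ) (h₂ := g) ?_ du
      rw [hW0]; exact (hg.differentiable one_ne_zero).differentiableAt.hasDerivAt
    have df : HasDerivAt (fun h => deriv f (u s (Y s + h)))
        (deriv (deriv f) (W s) * ux s (Y s)) 0 := by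
      refine HasDerivAt.comp (0:ℝ) (h₂ := deriv f) ?_ du
      rw [hW0]; exact (hf.differentiable one_ne_zero).differentiableAt.hasDerivAt
    have l1 := dg.tendsto_slope_zero
    have l2 := df.tendsto_slope_zero
    have l3 : Tendsto (fun h => ux s (Y s + h)) (nhdsWithin 0 {0}ᶜ) (nhds (ux s (Y s))) := by
      have hc : ContinuousOn (fun h : ℝ => ux s (Y s + h)) (Icc (-1:ℝ) 1) :=
        huxK.comp (f := fun h : ℝ => ((s, h) : ℝ × ℝ))
          (continuousOn_const.prodMk continuousOn_id) (fun h hh => ⟨hs, hh⟩)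
      have := (hc.continuousAt (Icc_mem_nhds (show (-1:ℝ) < 0 by norm_num)
        (show (0:ℝ) < 1 by norm_num))).tendsto
      simp only [add_zero] at this
      exact this.mono_left nhdsWithin_le_nhds
    have := l1.sub (l2.mul l3)
    refine (this.congr fun h => ?_).trans (le_of_eq ?_)
    · simp only [hR, zero_add, hW0, smul_eq_mul]
      ring
    · simp only [hF]; congr 1; ring
  have hpint : ∀ t ∈ Icc 0 T, ux t (Y t) = ux 0 (Y 0) + ∫ s in (0:ℝ)..t, F s := by
    intro t ht
    have hsub : Icc 0 t ⊆ Icc 0 T := Icc_subset_Icc_right ht.2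
    have hIoc : ∀ s ∈ Set.uIoc 0 t, s ∈ Icc 0 T := by
      intro s hs
      rw [uIoc_of_le ht.1] at hs
      exact hsub (Ioc_subset_Icc_self hs)
    have lim1 : Tendsto (fun h => ∫ s in (0:ℝ)..t, R h s) (nhdsWithin 0 {0}ᶜ)
        (nhds (∫ s in (0:ℝ)..t, F s)) := by
      refine intervalIntegral.tendsto_integral_filter_of_dominated_convergence
        (fun _ => L2 * B + L1 * B * B) ?_ ?_ ?_ ?_
      · filter_upwards [hev] with h hh
        rw [uIoc_of_le ht.1]
        exact (((hRc h hh.1).mono hsub).mono Ioc_subset_Icc_self).aestronglyMeasurable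
          measurableSet_Ioc
      · filter_upwards [hev] with h hh
        refine Eventually.of_forall fun s hs => ?_
        have hs' := hIoc s hs
        have b1 := hN (s, h) ⟨hs', hh.1⟩
        have b2 : |W s| ≤ N := by simpa [huW s hs'] using hN (s, 0) ⟨hs', h01⟩
        have b3 := hlip s hs' h hh.1
        have b4 := hB (s, h) ⟨hs', hh.1⟩
        have hB0 : 0 ≤ B := (abs_nonneg _).trans b4
        simp only at b1 b4
        have e1 := (hL2' _ _ b1 b2).trans (mul_le_mul_of_nonneg_left b3 hL2)
        have e2 := (hL1' _ _ b1 b2).trans (mul_le_mul_of_nonneg_left b3 hL1)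
        rw [abs_sub_comm] at e2
        have e3 : |(deriv f (W s) - deriv f (u s (Y s + h))) * ux s (Y s + h)|
            ≤ (L1 * (B * |h|)) * B := by
          rw [abs_mul]
          exact mul_le_mul e2 b4 (abs_nonneg _) (by positivity)
        have e4 := abs_add_le (g (u s (Y s + h)) - g (W s))
          ((deriv f (W s) - deriv f (u s (Y s + h))) * ux s (Y s + h))
        rw [Real.norm_eq_abs, hR]
        simp only
        rw [abs_div, div_le_iff₀ (abs_pos.mpr hh.2)]
        nlinarith
      · exact intervalIntegrable_const
      · exact Eventually.of_forall fun s hs => hRlim s (hIoc s hs)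
    have sl : ∀ t ∈ Icc 0 T, Tendsto (fun h => (u t (Y t + h) - u t (Y t)) / h)
        (nhdsWithin 0 {0}ᶜ) (nhds (ux t (Y t))) := fun t ht => by
      have := (hux t ht.1 (Y t)).tendsto_slope_zero
      refine this.congr fun h => ?_
      rw [smul_eq_mul]; ring
    have lim2 := (sl t ht).sub (sl 0 ⟨le_rfl, ht.1.trans ht.2⟩)
    have := tendsto_nhds_unique lim1 (lim2.congr' (by
      filter_upwards [hev] with h hh
      exact (hRint t ht h hh.1).symm))
    linarith
  intro s hs
  have hFint : IntervalIntegrable F MeasureTheory.volume 0 s :=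
    (hFc.mono (Icc_subset_Icc_right hs.2)).intervalIntegrable_of_Icc hs.1
  have : Fact (s ∈ Icc 0 T) := ⟨hs⟩
  have hd := (intervalIntegral.integral_hasDerivWithinAt_right (s := Icc 0 T) (t := Icc 0 T)
    hFint (hFc.stronglyMeasurableAtFilter_nhdsWithin measurableSet_Icc s) (hFc s hs)).const_add
      (ux 0 (Y 0))
  exact hd.congr hpint (hpint s hs)

/-! ### The front profile -/

lemma const_sign {h : ℝ → ℝ} (hc : Continuous h) (h0 : ∀ x, h x ≠ 0) :
    (∀ x, 0 < h x) ∨ (∀ x, h x < 0) := by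
  by_contra! hcon
  obtain ⟨⟨x, hx⟩, ⟨y, hy⟩⟩ := hcon
  obtain ⟨z, hz⟩ := mem_range_of_exists_le_of_exists_ge hc ⟨x, hx⟩ ⟨y, hy⟩
  exact h0 z hz

lemma bdd_of_limits {h : ℝ → ℝ} (hc : Continuous h) {l1 l2 : ℝ}
    (h1 : Tendsto h atBot (nhds l1)) (h2 : Tendsto h atTop (nhds l2)) :
    ∃ K > 0, ∀ x, |h x| ≤ K := by
  obtain ⟨X1, hX1⟩ := eventually_atBot.mp (h1.abs.eventually_le_const (lt_add_one |l1|))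
  obtain ⟨X2, hX2⟩ := eventually_atTop.mp (h2.abs.eventually_le_const (lt_add_one |l2|))
  obtain ⟨B, hB⟩ := (isCompact_Icc (a := X1) (b := X2)).exists_bound_of_continuousOn
    hc.continuousOn
  have hp1 : 0 < |l1| + 1 := by positivity
  have hp2 : 0 < |l2| + 1 := by positivity
  refine ⟨|l1| + 1 + (|l2| + 1) + |B|, by positivity, fun x => ?_⟩
  rcases le_total x X1 with hx | hx
  · linarith [hX1 x hx, abs_nonneg B]
  · rcases le_total X2 x with hx' | hx'
    · linarith [hX2 x hx', abs_nonneg B]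
    · have := hB x ⟨hx, hx'⟩
      rw [Real.norm_eq_abs] at this
      linarith [le_abs_self B]

lemma pos_lb_of_limits {h : ℝ → ℝ} (hc : Continuous h) (hpos : ∀ x, 0 < h x) {l1 l2 : ℝ}
    (h1 : Tendsto h atBot (nhds l1)) (h2 : Tendsto h atTop (nhds l2)) (hl1 : l1 ≠ 0)
    (hl2 : l2 ≠ 0) : ∃ c > 0, ∀ x, c ≤ h x := by
  obtain ⟨K, hK, hb⟩ := bdd_of_limits (hc.inv₀ fun x => (hpos x).ne') (h1.inv₀ hl1) (h2.inv₀ hl2)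
  refine ⟨K⁻¹, inv_pos.mpr hK, fun x => ?_⟩
  have : |(h x)⁻¹| ≤ K := hb x
  rw [abs_of_pos (inv_pos.mpr (hpos x))] at this
  exact inv_le_of_inv_le₀ (hpos x) this

/-- The sign of the wave speed relative to the frame: the stability of the rear state `um` forces
the characteristics to travel to the left, i.e. `a = σ - f'` is positive along the front. -/
lemma speed_pos {a g ub : ℝ → ℝ} (ha : Continuous a) (hg : ContDiff ℝ 1 g)
    (hub : ContDiff ℝ 1 ub) (hub' : ∀ x, deriv ub x ≠ 0) (hnc : ∀ x, a (ub x) ≠ 0)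
    (hprof : ∀ x, a (ub x) * deriv ub x = -g (ub x))
    {um : ℝ} (hlm : Tendsto ub atBot (nhds um)) (hgum : g um = 0) (hg'um : deriv g um < 0) :
    ∀ x, 0 < a (ub x) := by
  -- the sign `s` of the derivative of the front
  obtain ⟨s, hs⟩ : ∃ s : ℝ, ∀ x, 0 < s * deriv ub x := by
    rcases const_sign (hub.continuous_deriv le_rfl) hub' with h | h
    · exact ⟨1, fun x => by simpa using h x⟩
    · exact ⟨-1, fun x => by simpa using h x⟩
  have hmono : StrictMono fun x => s * ub x := strictMono_of_deriv_pos fun x => by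
    rw [deriv_const_mul _ (hub.differentiable one_ne_zero x)]
    exact hs x
  have hgt : ∀ x, 0 < s * (ub x - um) := by
    intro x
    have h1 : s * um ≤ s * ub (x - 1) :=
      hmono.monotone.le_of_tendsto (hlm.const_mul s) (x - 1)
    have h2 : s * ub (x - 1) < s * ub x := hmono (by linarith)
    linarith
  have hslope := ((hg.differentiable one_ne_zero) um).hasDerivAt.tendsto_slope
  have hev := hslope.eventually_lt_const hg'um
  have hlm' : Tendsto ub atBot (nhdsWithin um {um}ᶜ) :=
    tendsto_nhdsWithin_iff.mpr ⟨hlm, Eventually.of_forall fun x hx => by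
      have := hgt x
      rw [show ub x = um from hx] at this
      simp at this⟩
  obtain ⟨x, hx⟩ := (hlm'.eventually hev).exists
  rcases const_sign (ha.comp hub.continuous) hnc with h | h
  · exact h
  · exfalso
    rw [slope_def_field, hgum, sub_zero] at hx
    have hne : ub x - um ≠ 0 := fun h0 => by simpa [h0] using hgt x
    have h1 : g (ub x) * (ub x - um) < 0 := by
      have : g (ub x) * (ub x - um) = g (ub x) / (ub x - um) * (ub x - um) ^ 2 := by field_simp
      rw [this]
      exact mul_neg_of_neg_of_pos hx (by positivity)
    have h2 : a (ub x) * ((s * deriv ub x) * (s * (ub x - um))) = s ^ 2 * -(g (ub x) * (ub x - um)) := by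
      linear_combination (s ^ 2 * (ub x - um)) * hprof x
    have h3 := mul_pos (hs x) (hgt x)
    have h4 := mul_neg_of_neg_of_pos (h x) h3
    simp only [comp] at h4
    rw [h2] at h4
    nlinarith [sq_nonneg s]

/-- A positive function whose logarithmic derivative is bounded by `K` varies at most by a factor
`e^{K|y-x|}` between `x` and `y`. -/
lemma front_harnack {P r : ℝ → ℝ} {K : ℝ}
    (hP : ∀ x, HasDerivAt P (r x * P x) x) (hpos : ∀ x, 0 < P x) (hr : ∀ x, |r x| ≤ K) (x y : ℝ) :
    P y ≤ Real.exp (K * |y - x|) * P x := by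
  have hm : Monotone fun x => P x * Real.exp (K * x) := by
    refine monotone_of_hasDerivAt_nonneg (f' := fun x => (r x + K) * P x * Real.exp (K * x))
      (fun x => ?_) (fun x => ?_)
    · refine ((hP x).mul ((hasDerivAt_id x).const_mul K).exp).congr_deriv ?_
      simp only [id]; ring
    · have := (abs_le.mp (hr x)).1
      have := hpos x
      have : 0 ≤ r x + K := by linarith
      simp only [Pi.zero_apply]
      positivity
  have ha : Antitone fun x => P x * Real.exp (-K * x) := by
    refine antitone_of_hasDerivAt_nonpos (f' := fun x => (r x - K) * P x * Real.exp (-K * x))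
      (fun x => ?_) (fun x => ?_)
    · refine ((hP x).mul ((hasDerivAt_id x).const_mul (-K)).exp).congr_deriv ?_
      simp only [id]; ring
    · have := (abs_le.mp (hr x)).2
      have := mul_pos (hpos x) (Real.exp_pos (-K * x))
      simp only [Pi.zero_apply]
      rw [mul_assoc]
      exact mul_nonpos_of_nonpos_of_nonneg (by linarith) this.le
  rcases le_total x y with h | h
  · rw [abs_of_nonneg (by linarith), show K * (y - x) = K * y + -K * x by ring, Real.exp_add]
    have := mul_le_mul_of_nonneg_left (ha h) (Real.exp_pos (K * y)).le
    simp only at this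
    have e : Real.exp (K * y) * Real.exp (-K * y) = 1 := by rw [← Real.exp_add]; simp
    linear_combination this - P y * e
  · rw [abs_of_nonpos (by linarith), show K * -(y - x) = -K * y + K * x by ring, Real.exp_add]
    have := mul_le_mul_of_nonneg_left (hm h) (Real.exp_pos (-K * y)).le
    simp only at this
    have e : Real.exp (-K * y) * Real.exp (K * y) = 1 := by rw [← Real.exp_add]; simp
    linear_combination this - P y * e

/-- Quantitative description of the front. The profile equation `ub' = -g(ub)/a(ub)` gives a bounded
logarithmic derivative of `ub'`, hence a Harnack inequality, exponential decay at `-∞`, and two-sided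
bounds of `ub'` by `e^{-κx}` on right half-lines. At `+∞` the rate is exactly the critical one: the
logarithmic derivative differs from `-κ` by `O(|ub'|)`, which is integrable since `ub` is bounded. -/
lemma front_bounds {a g ub : ℝ → ℝ} (ha : ContDiff ℝ 1 a) (hg : ContDiff ℝ 2 g)
    (hub : ContDiff ℝ 2 ub) (hub' : ∀ x, deriv ub x ≠ 0) (hnc : ∀ x, a (ub x) ≠ 0)
    (hprof : ∀ x, a (ub x) * deriv ub x = -g (ub x))
    {um up : ℝ} (hlm : Tendsto ub atBot (nhds um)) (hlp : Tendsto ub atTop (nhds up))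
    (hgum : g um = 0) (hgup : g up = 0) (hg'um : deriv g um < 0) (hg'up : 0 < deriv g up)
    (hfum : a um ≠ 0) (hfup : a up ≠ 0) {κ : ℝ} (hκ : κ = deriv g up / |a up|) :
    ∃ a0 > 0, ∃ K > 0, ∃ Cu > 0, ∃ cm > 0, 0 < κ ∧ 0 < a um ∧ (∀ x, a0 ≤ a (ub x)) ∧
      (∀ x, |deriv ub x| ≤ K) ∧
      (∀ x y, |deriv ub y| ≤ Real.exp (K * |y - x|) * |deriv ub x|) ∧
      (∀ x, |deriv (deriv ub) x| ≤ K * |deriv ub x|) ∧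
      (∀ x, |deriv ub x| ≤ Cu * Real.exp (-(κ * max x 0))) ∧
      (∀ x ≤ 0, |deriv ub x| ≤ Cu * Real.exp (cm * x)) ∧
      (∀ R, ∃ cR > 0, ∀ x, -R ≤ x → cR * Real.exp (-(κ * max x 0)) ≤ |deriv ub x|) ∧
      Tendsto (deriv ub) atBot (nhds 0) := by
  have hapos := speed_pos ha.continuous (hg.of_le one_le_two) (hub.of_le one_le_two) hub' hnc hprof
    hlm hgum hg'um
  have haum : 0 < a um := lt_of_le_of_ne
    (ge_of_tendsto' ((ha.continuous.tendsto um).comp hlm) fun x => (hapos x).le) hfum.symm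
  have haup : 0 < a up := lt_of_le_of_ne
    (ge_of_tendsto' ((ha.continuous.tendsto up).comp hlp) fun x => (hapos x).le) hfup.symm
  rw [abs_of_pos haup] at hκ
  have hκ0 : 0 < κ := by rw [hκ]; positivity
  obtain ⟨a0, ha0, ha0'⟩ := pos_lb_of_limits (ha.continuous.comp hub.continuous) hapos
    ((ha.continuous.tendsto um).comp hlm) ((ha.continuous.tendsto up).comp hlp) hfum hfup
  obtain ⟨s, hs1, hs⟩ : ∃ s : ℝ, |s| = 1 ∧ ∀ x, 0 < s * deriv ub x := by
    rcases const_sign (hub.continuous_deriv one_le_two) hub' with h | h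
    · exact ⟨1, by simp, fun x => by simpa using h x⟩
    · exact ⟨-1, by simp, fun x => by simpa using h x⟩
  have hP : ∀ x, |deriv ub x| = s * deriv ub x := fun x => by
    rw [← abs_of_pos (hs x), abs_mul, hs1, one_mul]
  -- `ub' = F(ub)` with `F = -g/a`
  have hub'eq : ∀ x, deriv ub x = -g (ub x) / a (ub x) := fun x => by
    rw [eq_div_iff (hapos x).ne', mul_comm]; exact hprof x
  have hd0m : Tendsto (deriv ub) atBot (nhds 0) := by
    have : Tendsto (fun x => -g (ub x) / a (ub x)) atBot (nhds (-g um / a um)) :=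
      (((hg.continuous.tendsto um).comp hlm).neg).div ((ha.continuous.tendsto um).comp hlm) hfum
    rw [hgum, neg_zero, zero_div] at this
    exact this.congr fun x => (hub'eq x).symm
  have hd0p : Tendsto (deriv ub) atTop (nhds 0) := by
    have : Tendsto (fun x => -g (ub x) / a (ub x)) atTop (nhds (-g up / a up)) :=
      (((hg.continuous.tendsto up).comp hlp).neg).div ((ha.continuous.tendsto up).comp hlp) hfup
    rw [hgup, neg_zero, zero_div] at this
    exact this.congr fun x => (hub'eq x).symm
  have hdc := hub.continuous_deriv one_le_two
  have ha'c := ha.continuous_deriv le_rfl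
  have hg'c := hg.continuous_deriv one_le_two
  -- logarithmic derivative of `ub'`
  set r : ℝ → ℝ := fun x => -(deriv a (ub x) * deriv ub x + deriv g (ub x)) / a (ub x) with hr
  have hrc : Continuous r :=
    (((ha'c.comp hub.continuous).mul hdc).add (hg'c.comp hub.continuous)).neg.div
      (ha.continuous.comp hub.continuous) fun x => (hapos x).ne'
  have hrm : Tendsto r atBot (nhds (-(deriv a um * 0 + deriv g um) / a um)) :=
    (((((ha'c.tendsto um).comp hlm).mul hd0m).add ((hg'c.tendsto um).comp hlm)).neg).div
      ((ha.continuous.tendsto um).comp hlm) hfum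
  have hrp : Tendsto r atTop (nhds (-(deriv a up * 0 + deriv g up) / a up)) :=
    (((((ha'c.tendsto up).comp hlp).mul hd0p).add ((hg'c.tendsto up).comp hlp)).neg).div
      ((ha.continuous.tendsto up).comp hlp) hfup
  have hd2 : ∀ x, HasDerivAt (deriv ub) (r x * deriv ub x) x := by
    intro x
    have h1 : HasDerivAt (deriv ub) (deriv (deriv ub) x) x :=
      ((hub.differentiable_deriv_two) x).hasDerivAt
    have h0 : HasDerivAt ub (deriv ub x) x := ((hub.differentiable two_ne_zero) x).hasDerivAt
    have h2 : HasDerivAt (fun y => a (ub y)) (deriv a (ub x) * deriv ub x) x :=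
      HasDerivAt.comp x (h₂ := a) ((ha.differentiable one_ne_zero) _).hasDerivAt h0
    have h3 : HasDerivAt (fun y => g (ub y)) (deriv g (ub x) * deriv ub x) x :=
      HasDerivAt.comp x (h₂ := g) ((hg.differentiable two_ne_zero) _).hasDerivAt h0
    have h4 := h2.mul h1
    have h5 := h3.neg
    have h6 := h4.unique (h5.congr_of_eventuallyEq (Eventually.of_forall hprof))
    convert h1 using 1
    simp only [hr]
    have := (hapos x).ne'
    field_simp
    linear_combination -h6
  obtain ⟨K1, hK1, hK1'⟩ := bdd_of_limits hrc hrm hrp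
  obtain ⟨K2, hK2, hK2'⟩ := bdd_of_limits hdc hd0m hd0p
  have hPd : ∀ x, HasDerivAt (fun x => s * deriv ub x) (r x * (s * deriv ub x)) x := fun x =>
    ((hd2 x).const_mul s).congr_deriv (by ring)
  set K := max K1 K2 with hKdef
  have hKpos : 0 < K := lt_max_of_lt_left hK1
  have hharn : ∀ x y, |deriv ub y| ≤ Real.exp (K * |y - x|) * |deriv ub x| := by
    intro x y
    rw [hP, hP]
    exact front_harnack hPd hs (fun x => (hK1' x).trans (le_max_left _ _)) x y
  -- exponential bound at the rear
  have hcm' : 0 < -(deriv a um * 0 + deriv g um) / a um := by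
    rw [mul_zero, zero_add]; exact div_pos (by linarith) haum
  set cm := (-(deriv a um * 0 + deriv g um) / a um) / 2 with hcm
  have hcm0 : 0 < cm := by positivity
  obtain ⟨Y0, hY0⟩ := eventually_atBot.mp (hrm.eventually_const_le (show cm < _ by linarith))
  set Y := min Y0 0 with hY
  have hYr : ∀ x ≤ Y, cm ≤ r x := fun x hx => hY0 x (hx.trans (min_le_left _ _))
  have hYneg : Y ≤ 0 := min_le_right _ _
  have hmonoL : MonotoneOn (fun x => (s * deriv ub x) * Real.exp (-cm * x)) (Iic Y) := by
    have hder : ∀ x, HasDerivAt (fun x => (s * deriv ub x) * Real.exp (-cm * x))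
        ((r x - cm) * (s * deriv ub x) * Real.exp (-cm * x)) x := fun x => by
      refine ((hPd x).mul ((hasDerivAt_id x).const_mul (-cm)).exp).congr_deriv ?_
      simp only [id]; ring
    refine monotoneOn_of_hasDerivWithinAt_nonneg (convex_Iic Y)
      (fun x _ => (hder x).continuousAt.continuousWithinAt)
      (fun x _ => (hder x).hasDerivWithinAt) (fun x hx => ?_)
    rw [interior_Iic] at hx
    have h1 := hYr x (le_of_lt hx)
    have h2 := hs x
    have h3 : 0 ≤ r x - cm := by linarith
    positivity
  have hrear : ∀ x ≤ 0, |deriv ub x| ≤ (K2 * Real.exp (-cm * Y)) * Real.exp (cm * x) := by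
    intro x hx
    rcases le_total x Y with h | h
    · have h1 := hmonoL (mem_Iic.mpr h) (mem_Iic.mpr le_rfl) h
      simp only [← hP] at h1
      have h2 := mul_le_mul_of_nonneg_right (hK2' Y) (Real.exp_pos (-cm * Y)).le
      have h3 := mul_le_mul_of_nonneg_right (h1.trans h2) (Real.exp_pos (cm * x)).le
      have e : Real.exp (-cm * x) * Real.exp (cm * x) = 1 := by rw [← Real.exp_add]; simp
      linear_combination h3 - |deriv ub x| * e
    · rw [mul_assoc, ← Real.exp_add]
      have : 1 ≤ Real.exp (-cm * Y + cm * x) := Real.one_le_exp (by nlinarith)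
      nlinarith [hK2' x]
  -- at the critical rate, `r + κ` is integrable because it is controlled by `ub'`
  have hbig : (fun x => r x + κ) =O[atTop] (deriv ub) := by
    have hj : HasDerivAt (fun v => deriv g v / a v)
        ((deriv (deriv g) up * a up - deriv g up * deriv a up) / a up ^ 2) up :=
      ((hg.differentiable_deriv_two) up).hasDerivAt.div
        ((ha.differentiable one_ne_zero) up).hasDerivAt hfup
    have h1 := (hj.isBigO_sub).comp_tendsto hlp
    have h2 := ((((hg.differentiable two_ne_zero) up).hasDerivAt.isTheta_sub
      hg'up.ne').isBigO_symm).comp_tendsto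
      (hlp.prodMk (tendsto_const_pure (b := up)))
    have h3 := h1.trans h2
    have hA : (fun x => a (ub x)) =O[atTop] (fun _ => (1:ℝ)) :=
      ((ha.continuous.tendsto up).comp hlp).isBigO_one ℝ
    have hA' : (fun x => deriv a (ub x) / a (ub x)) =O[atTop] (fun _ => (1:ℝ)) :=
      (((ha'c.tendsto up).comp hlp).div ((ha.continuous.tendsto up).comp hlp) hfup).isBigO_one ℝ
    have h4 : (fun x => g (ub x) - g up) =O[atTop] (deriv ub) := by
      have := (hA.mul (Asymptotics.isBigO_refl (deriv ub) atTop)).neg_left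
      simp only [one_mul] at this
      refine this.congr_left fun x => ?_
      rw [hprof x, hgup]; ring
    have h5 := h3.trans h4
    have h6 := hA'.mul (Asymptotics.isBigO_refl (deriv ub) atTop)
    simp only [one_mul] at h6
    refine (h6.add h5).neg_left.congr_left fun x => ?_
    simp only [hr, hκ, comp]
    ring
  obtain ⟨C1, hC1⟩ := hbig.bound
  obtain ⟨X0, hX0⟩ := eventually_atTop.mp hC1
  set X := max X0 0 with hX
  have hXr : ∀ x, X ≤ x → |r x + κ| ≤ C1 * (s * deriv ub x) := fun x hx => by
    have := hX0 x ((le_max_left _ _).trans hx)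
    simpa [hP] using this
  have hXnn : 0 ≤ X := le_max_right _ _
  obtain ⟨M, hM, hM'⟩ := bdd_of_limits hub.continuous hlm hlp
  -- with `s` the sign of `ub'`, the factor `e^{±C1 s ub}` absorbs `r + κ` and makes
  -- `|ub'| e^{κx}` monotone up to bounded factors
  have hder : ∀ (σ' x : ℝ), HasDerivAt
      (fun x => (s * deriv ub x) * Real.exp (κ * x + σ' * (s * ub x)))
      ((r x + κ + σ' * (s * deriv ub x)) * ((s * deriv ub x) *
        Real.exp (κ * x + σ' * (s * ub x)))) x := fun σ' x => by
    have h0 : HasDerivAt ub (deriv ub x) x := ((hub.differentiable two_ne_zero) x).hasDerivAt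
    have h1 := (((hasDerivAt_id x).const_mul κ).add ((h0.const_mul s).const_mul σ')).exp
    refine ((hPd x).mul h1).congr_deriv ?_
    simp only [id, Pi.add_apply]; ring
  have hmonoR : MonotoneOn (fun x => (s * deriv ub x) * Real.exp (κ * x + C1 * (s * ub x)))
      (Ici X) := by
    refine monotoneOn_of_hasDerivWithinAt_nonneg (convex_Ici X)
      (fun x _ => (hder C1 x).continuousAt.continuousWithinAt)
      (fun x _ => (hder C1 x).hasDerivWithinAt) (fun x hx => ?_)
    rw [interior_Ici] at hx
    have h1 := (abs_le.mp (hXr x (le_of_lt hx))).1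
    have h2 := mul_pos (hs x) (Real.exp_pos (κ * x + C1 * (s * ub x)))
    exact mul_nonneg (by linarith) h2.le
  have hantiR : AntitoneOn (fun x => (s * deriv ub x) * Real.exp (κ * x + -C1 * (s * ub x)))
      (Ici X) := by
    refine antitoneOn_of_hasDerivWithinAt_nonpos (convex_Ici X)
      (fun x _ => (hder (-C1) x).continuousAt.continuousWithinAt)
      (fun x _ => (hder (-C1) x).hasDerivWithinAt) (fun x hx => ?_)
    rw [interior_Ici] at hx
    have h1 := (abs_le.mp (hXr x (le_of_lt hx))).2
    have h2 := mul_pos (hs x) (Real.exp_pos (κ * x + -C1 * (s * ub x)))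
    exact mul_nonpos_of_nonpos_of_nonneg (by linarith) h2.le
  have hCM : ∀ x, |C1 * (s * ub x)| ≤ |C1| * M := fun x => by
    rw [abs_mul, abs_mul, hs1, one_mul]
    exact mul_le_mul_of_nonneg_left (hM' x) (abs_nonneg _)
  set Q := |C1| * M with hQ
  have hup : ∀ x, X ≤ x → |deriv ub x| * Real.exp (κ * x) ≤ |deriv ub X| * Real.exp (κ * X + 2 * Q) := by
    intro x hx
    have h1 := hantiR (mem_Ici.mpr le_rfl) (mem_Ici.mpr hx) hx
    simp only [← hP] at h1
    have hx1 := (abs_le.mp (hCM x)).2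
    have hx2 := (abs_le.mp (hCM X)).1
    calc |deriv ub x| * Real.exp (κ * x)
        = (|deriv ub x| * Real.exp (κ * x + -C1 * (s * ub x))) * Real.exp (C1 * (s * ub x)) := by
          rw [mul_assoc, ← Real.exp_add]; ring_nf
      _ ≤ (|deriv ub X| * Real.exp (κ * X + -C1 * (s * ub X))) * Real.exp (C1 * (s * ub x)) := by
          gcongr
      _ = |deriv ub X| * Real.exp (κ * X + -C1 * (s * ub X) + C1 * (s * ub x)) := by
          rw [mul_assoc, ← Real.exp_add]
      _ ≤ _ := mul_le_mul_of_nonneg_left (Real.exp_le_exp.mpr (by linarith)) (abs_nonneg _)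
  have hlow : ∀ x, X ≤ x → |deriv ub X| * Real.exp (κ * X - 2 * Q) ≤ |deriv ub x| * Real.exp (κ * x) := by
    intro x hx
    have h1 := hmonoR (mem_Ici.mpr le_rfl) (mem_Ici.mpr hx) hx
    simp only [← hP] at h1
    have hx1 := (abs_le.mp (hCM x)).2
    have hx2 := (abs_le.mp (hCM X)).1
    calc |deriv ub X| * Real.exp (κ * X - 2 * Q)
        ≤ |deriv ub X| * Real.exp (κ * X + C1 * (s * ub X) + -(C1 * (s * ub x))) :=
          mul_le_mul_of_nonneg_left (Real.exp_le_exp.mpr (by linarith)) (abs_nonneg _)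
      _ = (|deriv ub X| * Real.exp (κ * X + C1 * (s * ub X))) * Real.exp (-(C1 * (s * ub x))) := by
          rw [mul_assoc, ← Real.exp_add]
      _ ≤ (|deriv ub x| * Real.exp (κ * x + C1 * (s * ub x))) * Real.exp (-(C1 * (s * ub x))) := by
          gcongr
      _ = |deriv ub x| * Real.exp (κ * x) := by
          rw [mul_assoc, ← Real.exp_add]; ring_nf
  have hXpos : 0 < |deriv ub X| := abs_pos.mpr (hub' X)
  set U1 := |deriv ub X| * Real.exp (κ * X + 2 * Q) with hU1
  set U2 := K2 * Real.exp (κ * X) with hU2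
  set U3 := K2 * Real.exp (-cm * Y) with hU3
  have hU1p : 0 < U1 := by positivity
  have hU2p : 0 < U2 := by positivity
  have hU3p : 0 < U3 := by positivity
  refine ⟨a0, ha0, K, hKpos, U1 + U2 + U3, by positivity, cm, hcm0, hκ0, haum, ha0',
    fun x => (hK2' x).trans (le_max_right _ _), hharn, fun x => ?_, fun x => ?_, fun x hx => ?_,
    fun R => ?_, hd0m⟩
  · rw [(hd2 x).deriv, abs_mul]
    exact mul_le_mul_of_nonneg_right ((hK1' x).trans (le_max_left _ _)) (abs_nonneg _)
  · rw [Real.exp_neg, ← div_eq_mul_inv, le_div_iff₀ (Real.exp_pos _)]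
    rcases le_total X x with h | h
    · rw [max_eq_left (hXnn.trans h)]
      linarith [hup x h]
    · have h1 : |deriv ub x| * Real.exp (κ * max x 0) ≤ K2 * Real.exp (κ * X) := by
        gcongr
        · exact hK2' x
        · exact max_le h hXnn
      linarith
  · refine (hrear x hx).trans ?_
    gcongr
    linarith
  · set Z := max R X with hZ
    have hXZ : X ≤ Z := le_max_right _ _
    refine ⟨min (|deriv ub X| * Real.exp (κ * X - 2 * Q)) (|deriv ub 0| / Real.exp (K * Z)),
      lt_min (by positivity) (div_pos (abs_pos.mpr (hub' 0)) (Real.exp_pos _)), fun x hx => ?_⟩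
    rcases le_total X x with h | h
    · rw [Real.exp_neg, ← div_eq_mul_inv, div_le_iff₀ (Real.exp_pos _), max_eq_left (hXnn.trans h)]
      exact (min_le_left _ _).trans (hlow x h)
    · have h1 : Real.exp (-(κ * max x 0)) ≤ 1 := Real.exp_le_one_iff.mpr (by
        have := mul_nonneg hκ0.le (le_max_right x 0); linarith)
      have h2 := hharn x 0
      have h3 : |0 - x| ≤ Z := by
        rw [zero_sub, abs_neg]
        exact abs_le.mpr ⟨by linarith [le_max_left R X], by linarith⟩
      have h4 : |deriv ub 0| / Real.exp (K * Z) ≤ |deriv ub x| := by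
        rw [div_le_iff₀ (Real.exp_pos _), mul_comm]
        exact h2.trans (by gcongr)
      have h5 : 0 < |deriv ub 0| / Real.exp (K * Z) :=
        div_pos (abs_pos.mpr (hub' 0)) (Real.exp_pos _)
      calc _ ≤ (|deriv ub 0| / Real.exp (K * Z)) * 1 :=
            mul_le_mul (min_le_right _ _) h1 (Real.exp_pos _).le h5.le
        _ ≤ _ := by linarith

/-! ### Decay behind the front -/

/-- Exponential decay of the perturbation along a characteristic issued from the rear region, where
the front is close to the stable state `um`. The quantity `n = g(W) + a(W) p`, which vanishes on the
front, solves the same linear equation as `p` and gives the decay of `p - ub'(X)`. -/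
lemma rear_decay {a g ub : ℝ → ℝ} (ha : ContDiff ℝ 1 a) (hg : ContDiff ℝ 1 g)
    (hub : ContDiff ℝ 1 ub) (hprof : ∀ x, a (ub x) * deriv ub x = -g (ub x))
    {um c1 al η ε La Lg Ab R : ℝ} (hc1 : 0 < c1) (hal0 : 0 < al) (hLa : 0 ≤ La) (hLg : 0 ≤ Lg)
    (hgm : ∀ v w, |v - um| ≤ η → |w - um| ≤ η → (v - w) * (g v - g w) ≤ -(3 * c1) * (v - w) ^ 2)
    (hg' : ∀ v, |v - um| ≤ η → deriv g v ≤ -(3 * c1))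
    (haL : ∀ v w, |v - um| ≤ η → |w - um| ≤ η → |a v - a w| ≤ La * |v - w|)
    (hgL : ∀ v w, |v - um| ≤ η → |w - um| ≤ η → |g v - g w| ≤ Lg * |v - w|)
    (ha' : ∀ v, |v - um| ≤ η → |deriv a v| ≤ La)
    (hal : ∀ v, |v - um| ≤ η → al ≤ a v) (hab : ∀ v, |v - um| ≤ η → a v ≤ Ab)
    (hLε : La * ε ≤ c1) (hR : ∀ x ≤ -R, |ub x - um| ≤ η ∧ |deriv ub x| ≤ ε)
    {X W p : ℝ → ℝ} {T e0 : ℝ} (hT : 0 ≤ T)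
    (hX : ∀ s ∈ Icc 0 T, HasDerivWithinAt X (-a (W s)) (Icc 0 T) s)
    (hW : ∀ s ∈ Icc 0 T, HasDerivWithinAt W (g (W s)) (Icc 0 T) s)
    (hp : ∀ s ∈ Icc 0 T, HasDerivWithinAt p ((deriv a (W s) * p s + deriv g (W s)) * p s)
      (Icc 0 T) s)
    (hWη : ∀ s ∈ Icc 0 T, |W s - um| ≤ η) (hX0 : X 0 ≤ -R) (hp0 : |p 0| < ε)
    (hv0 : |W 0 - ub (X 0)| ≤ e0) (hq0 : |p 0 - deriv ub (X 0)| ≤ e0) :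
    |W T - ub (X T)| ≤ e0 * Real.exp (-c1 * T) ∧
      |p T - deriv ub (X T)| ≤ (2 * (Lg + c1) + Ab) / al * (e0 * Real.exp (-c1 * T)) := by
  have h0T : (0:ℝ) ∈ Icc 0 T := ⟨le_rfl, hT⟩
  have hTT : T ∈ Icc 0 T := ⟨hT, le_rfl⟩
  have hεpos : 0 < ε := (abs_nonneg _).trans_lt hp0
  have hXR : ∀ s ∈ Icc 0 T, X s ≤ -R := by
    have hanti : AntitoneOn X (Icc 0 T) := by
      refine antitoneOn_of_hasDerivWithinAt_nonpos (convex_Icc 0 T)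
        (fun s hs => (hX s hs).continuousWithinAt)
        (fun s hs => (hX s (interior_subset hs)).mono interior_subset) (fun s hs => ?_)
      linarith [hal _ (hWη s (interior_subset hs))]
    exact fun s hs => (hanti h0T hs hs.1).trans hX0
  -- a bound used for `n` at both ends
  have hrem : ∀ s ∈ Icc 0 T, |(g (W s) - g (ub (X s)))
      + (a (W s) - a (ub (X s))) * deriv ub (X s)| ≤ (Lg + c1) * |W s - ub (X s)| := by
    intro s hs
    obtain ⟨h1, h2⟩ := hR _ (hXR s hs)
    have h3 := hgL _ _ (hWη s hs) h1
    have h4 := haL _ _ (hWη s hs) h1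
    have h5 : |(a (W s) - a (ub (X s))) * deriv ub (X s)| ≤ (La * |W s - ub (X s)|) * ε := by
      rw [abs_mul]; exact mul_le_mul h4 h2 (abs_nonneg _) (by positivity)
    have h6 := mul_le_mul_of_nonneg_right hLε (abs_nonneg (W s - ub (X s)))
    have h7 := abs_add_le (g (W s) - g (ub (X s))) ((a (W s) - a (ub (X s))) * deriv ub (X s))
    linarith
  -- decay of `v = W - ub(X)`
  have hv : ∀ s ∈ Icc 0 T, HasDerivWithinAt (fun s => W s - ub (X s))
      (g (W s) + a (W s) * deriv ub (X s)) (Icc 0 T) s := fun s hs => by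
    have h1 : HasDerivAt ub (deriv ub (X s)) (X s) :=
      (hub.differentiable one_ne_zero _).hasDerivAt
    exact ((hW s hs).sub (h1.comp_hasDerivWithinAt s (hX s hs))).congr_deriv (by ring)
  have hvd := decay (c := 2 * c1) (ε := |W 0 - ub (X 0)| + 1) (by linarith) hv (fun s hs _ => by
      obtain ⟨h1, h2⟩ := hR _ (hXR s hs)
      have h3 := hgm _ _ (hWη s hs) h1
      have h4 := haL _ _ (hWη s hs) h1
      set v := W s - ub (X s)
      have h5 : |v * ((a (W s) - a (ub (X s))) * deriv ub (X s))| ≤ c1 * v ^ 2 := by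
        rw [abs_mul, abs_mul]
        calc |v| * (|a (W s) - a (ub (X s))| * |deriv ub (X s)|)
            ≤ |v| * ((La * |v|) * ε) := by gcongr
          _ = (La * ε) * |v| ^ 2 := by ring
          _ ≤ c1 * v ^ 2 := by rw [sq_abs]; exact mul_le_mul_of_nonneg_right hLε (sq_nonneg _)
      have h6 := (abs_le.mp h5).2
      have h7 : v * (g (W s) + a (W s) * deriv ub (X s)) = v * (g (W s) - g (ub (X s)))
          + v * ((a (W s) - a (ub (X s))) * deriv ub (X s)) := by
        linear_combination v * hprof (X s)
      rw [h7]; linarith) (by linarith)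
  have hfac : ∀ s ∈ Icc 0 T, |p s| ≤ ε →
      deriv a (W s) * p s + deriv g (W s) ≤ -(2 * c1) := fun s hs hps => by
    have h1 : |deriv a (W s) * p s| ≤ La * ε := by
      rw [abs_mul]; exact mul_le_mul (ha' _ (hWη s hs)) hps (abs_nonneg _) hLa
    linarith [hg' _ (hWη s hs), (abs_le.mp h1).2]
  have hpd := decay (c := 2 * c1) (ε := ε) (by linarith) hp (fun s hs hps => by
      have := mul_le_mul_of_nonneg_right (hfac s hs hps) (sq_nonneg (p s))
      linarith) hp0
  have hpε : ∀ s ∈ Icc 0 T, |p s| ≤ ε := fun s hs => by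
    have h1 : Real.exp (-(2 * c1 / 2) * s) ≤ 1 :=
      Real.exp_le_one_iff.mpr (by nlinarith [hs.1])
    have := mul_le_mul_of_nonneg_left h1 (abs_nonneg (p 0))
    linarith [hpd s hs]
  have hn : ∀ s ∈ Icc 0 T, HasDerivWithinAt (fun s => g (W s) + a (W s) * p s)
      ((deriv a (W s) * p s + deriv g (W s)) * (g (W s) + a (W s) * p s)) (Icc 0 T) s :=
    fun s hs => by
      have h1 : HasDerivAt g (deriv g (W s)) (W s) := (hg.differentiable one_ne_zero _).hasDerivAt
      have h2 : HasDerivAt a (deriv a (W s)) (W s) := (ha.differentiable one_ne_zero _).hasDerivAt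
      exact ((h1.comp_hasDerivWithinAt s (hW s hs)).add
        ((h2.comp_hasDerivWithinAt s (hW s hs)).mul (hp s hs))).congr_deriv (by
          simp only [comp]; ring)
  have hnd := decay (c := 2 * c1) (ε := |g (W 0) + a (W 0) * p 0| + 1) (by linarith) hn
    (fun s hs _ => by
      have := mul_le_mul_of_nonneg_right (hfac s hs (hpε s hs))
        (sq_nonneg (g (W s) + a (W s) * p s))
      linarith) (by linarith)
  have e1 : -(2 * c1 / 2) * T = -c1 * T := by ring
  have hvT := hvd T hTT
  have hnT := hnd T hTT
  simp only [e1] at hvT hnT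
  set E := Real.exp (-c1 * T) with hE
  have hEpos : 0 < E := Real.exp_pos _
  have hvT' : |W T - ub (X T)| ≤ e0 * E :=
    hvT.trans (mul_le_mul_of_nonneg_right hv0 hEpos.le)
  have he0 : 0 ≤ e0 := (abs_nonneg _).trans hv0
  refine ⟨hvT', ?_⟩
  have hn0 : |g (W 0) + a (W 0) * p 0| ≤ (Lg + c1 + Ab) * e0 := by
    have h1 : g (W 0) + a (W 0) * p 0 = ((g (W 0) - g (ub (X 0)))
      + (a (W 0) - a (ub (X 0))) * deriv ub (X 0)) + a (W 0) * (p 0 - deriv ub (X 0)) := by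
      linear_combination hprof (X 0)
    have h2 := hrem 0 h0T
    have h3 : |a (W 0) * (p 0 - deriv ub (X 0))| ≤ Ab * e0 := by
      have := hal _ (hWη 0 h0T)
      have := hab _ (hWη 0 h0T)
      rw [abs_mul, abs_of_pos (by linarith : 0 < a (W 0))]
      exact mul_le_mul this hq0 (abs_nonneg _) (by linarith)
    have h4 : (Lg + c1) * |W 0 - ub (X 0)| ≤ (Lg + c1) * e0 := by gcongr
    rw [h1]
    linarith [abs_add_le ((g (W 0) - g (ub (X 0)))
      + (a (W 0) - a (ub (X 0))) * deriv ub (X 0)) (a (W 0) * (p 0 - deriv ub (X 0)))]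
  have hq : a (W T) * (p T - deriv ub (X T)) = (g (W T) + a (W T) * p T)
      - ((g (W T) - g (ub (X T))) + (a (W T) - a (ub (X T))) * deriv ub (X T)) := by
    linear_combination -hprof (X T)
  have h1 : |a (W T) * (p T - deriv ub (X T))| ≤ (2 * (Lg + c1) + Ab) * (e0 * E) := by
    rw [hq]
    have h2 := hrem T hTT
    have h3 : (Lg + c1) * |W T - ub (X T)| ≤ (Lg + c1) * (e0 * E) := by gcongr
    have h4 := mul_le_mul_of_nonneg_right hn0 hEpos.le
    linarith [abs_sub (g (W T) + a (W T) * p T)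
      ((g (W T) - g (ub (X T))) + (a (W T) - a (ub (X T))) * deriv ub (X T))]
  have haT := hal _ (hWη T hTT)
  rw [abs_mul, abs_of_pos (by linarith : 0 < a (W T))] at h1
  rw [div_mul_eq_mul_div, le_div_iff₀ hal0]
  have := mul_le_mul_of_nonneg_right haT (abs_nonneg (p T - deriv ub (X T)))
  linarith

/-! ### Transport relative to the front -/

/-- Consequences of the Harnack inequality `|ub'(y)| ≤ e^{K|y-x|} |ub'(x)|` at unit distance. -/
lemma harnack_mvt {ub : ℝ → ℝ} (hub : ContDiff ℝ 2 ub) {K : ℝ} (hK : 0 < K)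
    (hharn : ∀ x y, |deriv ub y| ≤ Real.exp (K * |y - x|) * |deriv ub x|)
    (h2 : ∀ x, |deriv (deriv ub) x| ≤ K * |deriv ub x|) {x y : ℝ} (hxy : |y - x| ≤ 1) :
    |deriv ub y| ≤ Real.exp K * |deriv ub x| ∧
    |ub y - ub x| ≤ Real.exp K * |deriv ub x| * |y - x| ∧
      |deriv ub y - deriv ub x| ≤ K * Real.exp K * |deriv ub x| * |y - x| := by
  have hz : ∀ z ∈ uIcc x y, |deriv ub z| ≤ Real.exp K * |deriv ub x| := fun z hz => by
    have h1 : |z - x| ≤ 1 := (abs_sub_left_of_mem_uIcc hz).trans hxy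
    refine (hharn x z).trans ?_
    gcongr
    nlinarith
  refine ⟨hz y right_mem_uIcc, ?_, ?_⟩
  · exact (convex_uIcc x y).norm_image_sub_le_of_norm_deriv_le
      (fun z _ => hub.differentiable two_ne_zero z) (fun z hz' => hz z hz') left_mem_uIcc
      right_mem_uIcc
  · refine (convex_uIcc x y).norm_image_sub_le_of_norm_deriv_le (f := deriv ub)
      (fun z _ => hub.differentiable_deriv_two z) (fun z hz' => ?_) left_mem_uIcc
      right_mem_uIcc
    have := hz z hz'
    rw [Real.norm_eq_abs, mul_assoc]
    exact (h2 z).trans (by gcongr)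

/-- A value close to `ub x0`, relatively to `|ub' x0|`, is attained by a small translate. -/
lemma exists_shift {ub : ℝ → ℝ} (hub : ContDiff ℝ 1 ub) (hub' : ∀ x, deriv ub x ≠ 0) {K : ℝ}
    (hK : 0 < K) (hharn : ∀ x y, |deriv ub y| ≤ Real.exp (K * |y - x|) * |deriv ub x|)
    {x0 w ε0 : ℝ} (hε : ε0 ≤ Real.exp (-K)) (hw : |w - ub x0| ≤ ε0 * |deriv ub x0|) :
    ∃ ψ, |ψ| ≤ Real.exp K * ε0 ∧ |ψ| ≤ 1 ∧ ub (x0 - ψ) = w := by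
  obtain ⟨s, hs1, hs⟩ : ∃ s : ℝ, |s| = 1 ∧ ∀ x, 0 < s * deriv ub x := by
    rcases const_sign (hub.continuous_deriv le_rfl) hub' with h | h
    · exact ⟨1, by simp, fun x => by simpa using h x⟩
    · exact ⟨-1, by simp, fun x => by simpa using h x⟩
  have hss : s * s = 1 := by rw [← abs_mul_abs_self, hs1, one_mul]
  have hP : ∀ x, |deriv ub x| = s * deriv ub x := fun x => by
    rw [← abs_of_pos (hs x), abs_mul, hs1, one_mul]
  -- lower bound for increments
  have hinc : ∀ y z, y < z → |y - x0| ≤ 1 → |z - x0| ≤ 1 →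
      Real.exp (-K) * |deriv ub x0| * (z - y) ≤ s * ub z - s * ub y := by
    intro y z hyz hy hz
    obtain ⟨ξ, hξ, he⟩ := exists_deriv_eq_slope ub hyz hub.continuous.continuousOn
      (hub.differentiable one_ne_zero).differentiableOn
    have hzy : 0 < z - y := by linarith
    rw [eq_div_iff hzy.ne'] at he
    have h1 : |x0 - ξ| ≤ 1 := by
      have := abs_le.mp hy
      have := abs_le.mp hz
      exact abs_le.mpr ⟨by linarith [hξ.2], by linarith [hξ.1]⟩
    have h2 : |deriv ub x0| ≤ Real.exp K * |deriv ub ξ| := (hharn ξ x0).trans (by gcongr; nlinarith)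
    have h3 : Real.exp (-K) * |deriv ub x0| ≤ |deriv ub ξ| := by
      rw [Real.exp_neg, inv_mul_le_iff₀ (Real.exp_pos K)]; exact h2
    calc _ ≤ |deriv ub ξ| * (z - y) := by gcongr
      _ = s * ub z - s * ub y := by rw [hP]; linear_combination s * he
  have hpos := abs_pos.mpr (hub' x0)
  have hw' : |s * w - s * ub x0| ≤ ε0 * |deriv ub x0| := by
    rw [← mul_sub, abs_mul, hs1, one_mul]; exact hw
  have hw2 : ε0 * |deriv ub x0| ≤ Real.exp (-K) * |deriv ub x0| := by gcongr
  obtain ⟨hl, hr⟩ := abs_le.mp hw'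
  have h1 := hinc (x0 - 1) x0 (by linarith) (by simp) (by simp)
  have h2 := hinc x0 (x0 + 1) (by linarith) (by simp) (by simp)
  obtain ⟨y, hy, hye⟩ := intermediate_value_Icc (show x0 - 1 ≤ x0 + 1 by linarith)
    (hub.continuous.const_smul s).continuousOn
    (show s * w ∈ Icc (s • ub (x0 - 1)) (s • ub (x0 + 1)) from
      ⟨by simp only [smul_eq_mul]; linarith, by simp only [smul_eq_mul]; linarith⟩)
  have hye : s * ub y = s * w := hye
  have hyw : ub y = w := by linear_combination s * hye + (w - ub y) * hss
  have hy1 : |x0 - y| ≤ 1 := abs_le.mpr ⟨by linarith [hy.2], by linarith [hy.1]⟩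
  refine ⟨x0 - y, ?_, hy1, by rw [sub_sub_cancel]; exact hyw⟩
  have hkey : Real.exp (-K) * |deriv ub x0| * |x0 - y| ≤ ε0 * |deriv ub x0| := by
    rcases lt_trichotomy y x0 with h | h | h
    · have := hinc y x0 h (by rw [abs_sub_comm]; exact hy1) (by simp)
      rw [abs_of_pos (by linarith : 0 < x0 - y)]
      rw [hyw] at this
      linarith
    · rw [h, sub_self, abs_zero, mul_zero]; exact (abs_nonneg _).trans hw
    · have := hinc x0 y h (by simp) (by rw [abs_sub_comm]; exact hy1)
      rw [abs_of_neg (by linarith : x0 - y < 0), neg_sub]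
      rw [hyw] at this
      linarith
  have h3 : Real.exp (-K) * |x0 - y| ≤ ε0 := by
    refine le_of_mul_le_mul_right ?_ hpos
    linarith
  rw [Real.exp_neg, inv_mul_le_iff₀ (Real.exp_pos K)] at h3
  exact h3

/-- A characteristic whose initial value lies on a translate of the front stays on that translate,
by uniqueness for ordinary differential equations. -/
lemma shift_lock {A G ub : ℝ → ℝ} {La Lg K ψ : ℝ} (hub : ContDiff ℝ 1 ub)
    (hprof : ∀ x, A (ub x) * deriv ub x = -G (ub x)) (hLa : 0 ≤ La)
    (hAL : ∀ v w, |A v - A w| ≤ La * |v - w|) (hGL : ∀ v w, |G v - G w| ≤ Lg * |v - w|)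
    (hK : ∀ x, |deriv ub x| ≤ K) {X W : ℝ → ℝ} {T : ℝ}
    (hX : ∀ s ∈ Icc 0 T, HasDerivWithinAt X (-A (W s)) (Icc 0 T) s)
    (hW : ∀ s ∈ Icc 0 T, HasDerivWithinAt W (G (W s)) (Icc 0 T) s)
    (h0 : W 0 = ub (X 0 - ψ)) : ∀ s ∈ Icc 0 T, W s = ub (X s - ψ) := by
  have hd : ∀ s ∈ Icc 0 T, HasDerivWithinAt (fun s => W s - ub (X s - ψ))
      (G (W s) + A (W s) * deriv ub (X s - ψ)) (Icc 0 T) s := fun s hs => by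
    have h1 : HasDerivAt ub (deriv ub (X s - ψ)) (X s - ψ) :=
      (hub.differentiable one_ne_zero _).hasDerivAt
    exact ((hW s hs).sub (h1.comp_hasDerivWithinAt s ((hX s hs).sub_const ψ))).congr_deriv
      (by ring)
  have := eq_zero_of_gronwall (K := Lg + La * K) hd (fun s _ => by
    have h1 : G (W s) + A (W s) * deriv ub (X s - ψ) = (G (W s) - G (ub (X s - ψ)))
        + (A (W s) - A (ub (X s - ψ))) * deriv ub (X s - ψ) := by
      linear_combination hprof (X s - ψ)
    have h2 : |(A (W s) - A (ub (X s - ψ))) * deriv ub (X s - ψ)|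
        ≤ (La * |W s - ub (X s - ψ)|) * K := by
      rw [abs_mul]
      exact mul_le_mul (hAL _ _) (hK _) (abs_nonneg _) (by positivity)
    rw [h1]
    linarith [hGL (W s) (ub (X s - ψ)), abs_add_le (G (W s) - G (ub (X s - ψ)))
      ((A (W s) - A (ub (X s - ψ))) * deriv ub (X s - ψ))]) (by simp [h0])
  exact fun s hs => sub_eq_zero.mp (this s hs)

/-- Along a characteristic staying on a translate of the front, the relative size
`ε0 = e0/|ub'(x0)|` of the perturbation is propagated: `p` and `n = g(W) + a(W) p` solve the same
linear equation, hence remain proportional. -/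
lemma front_transport {a g ub : ℝ → ℝ} (ha : ContDiff ℝ 1 a) (hg : ContDiff ℝ 1 g)
    (hub : ContDiff ℝ 2 ub) (hub' : ∀ x, deriv ub x ≠ 0)
    (hprof : ∀ x, a (ub x) * deriv ub x = -g (ub x))
    {a0 Ab K : ℝ} (ha0 : 0 < a0) (hK : 0 < K) (hal : ∀ x, a0 ≤ a (ub x)) (hab : ∀ x, a (ub x) ≤ Ab)
    (hharn : ∀ x y, |deriv ub y| ≤ Real.exp (K * |y - x|) * |deriv ub x|)
    (h2 : ∀ x, |deriv (deriv ub) x| ≤ K * |deriv ub x|)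
    {X W p : ℝ → ℝ} {T ψ ε0 : ℝ} (hT : 0 ≤ T)
    (hX : ∀ s ∈ Icc 0 T, HasDerivWithinAt X (-a (W s)) (Icc 0 T) s)
    (hW : ∀ s ∈ Icc 0 T, HasDerivWithinAt W (g (W s)) (Icc 0 T) s)
    (hp : ∀ s ∈ Icc 0 T, HasDerivWithinAt p ((deriv a (W s) * p s + deriv g (W s)) * p s)
      (Icc 0 T) s)
    (hWub : ∀ s ∈ Icc 0 T, W s = ub (X s - ψ)) (hψ : |ψ| ≤ Real.exp K * ε0) (hψ1 : |ψ| ≤ 1)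
    (hq0 : |p 0 - deriv ub (X 0)| ≤ ε0 * |deriv ub (X 0)|) (hε1 : ε0 ≤ 1 / 2)
    (hμ : 2 * Ab * (1 + K * Real.exp K ^ 2) * ε0 ≤ a0 / 2) :
    X T ≤ X 0 - a0 * T ∧ |W T - ub (X T)| ≤ Real.exp K ^ 2 * ε0 * |deriv ub (X T)| ∧
      |p T - deriv ub (X T)| ≤ (4 * Ab * (1 + K * Real.exp K ^ 2) * Real.exp K / a0
        + K * Real.exp K ^ 2) * ε0 * |deriv ub (X T)| := by
  have h0T : (0:ℝ) ∈ Icc 0 T := ⟨le_rfl, hT⟩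
  have hTT : T ∈ Icc 0 T := ⟨hT, le_rfl⟩
  set D := Real.exp K with hD
  have hDpos : 0 < D := Real.exp_pos K
  have hmv : ∀ x, |deriv ub (x - ψ)| ≤ D * |deriv ub x| ∧
      |ub (x - ψ) - ub x| ≤ D ^ 2 * ε0 * |deriv ub x| ∧
      |deriv ub (x - ψ) - deriv ub x| ≤ K * D ^ 2 * ε0 * |deriv ub x| := by
    intro x
    have e : x - ψ - x = -ψ := by ring
    obtain ⟨k1, k2, k3⟩ := harnack_mvt hub hK hharn h2 (x := x) (y := x - ψ)
      (by rw [e, abs_neg]; exact hψ1)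
    rw [e, abs_neg] at k2 k3
    refine ⟨k1, k2.trans ?_, k3.trans ?_⟩
    · calc _ ≤ D * |deriv ub x| * (D * ε0) := by gcongr
        _ = _ := by ring
    · calc _ ≤ K * D * |deriv ub x| * (D * ε0) := by gcongr
        _ = _ := by ring
  have hXT : X T ≤ X 0 - a0 * T := by
    have hanti : AntitoneOn (fun s => X s + a0 * s) (Icc 0 T) := by
      refine antitoneOn_of_hasDerivWithinAt_nonpos (f' := fun s => -a (W s) + a0) (convex_Icc 0 T)
        (fun s hs => ((hX s hs).continuousWithinAt).add (by fun_prop))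
        (fun s hs => ?_) (fun s hs => ?_)
      · exact (((hX s (interior_subset hs)).mono interior_subset).add
          ((hasDerivWithinAt_id s _).const_mul a0)).congr_deriv (by ring)
      · rw [hWub s (interior_subset hs)]
        linarith [hal (X s - ψ)]
    have := hanti h0T hTT hT
    simp only at this
    linarith
  refine ⟨hXT, by rw [hWub T hTT]; exact (hmv (X T)).2.1, ?_⟩
  -- the combination `k = p(0) n - n(0) p` vanishes: proportionality of `n = g(W) + a(W) p` and `p`
  have hpc : ContinuousOn p (Icc 0 T) := fun s hs => (hp s hs).continuousWithinAt
  have hWc : ContinuousOn W (Icc 0 T) := fun s hs => (hW s hs).continuousWithinAt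
  have hcc : ContinuousOn (fun s => deriv a (W s) * p s + deriv g (W s)) (Icc 0 T) :=
    (((ha.continuous_deriv le_rfl).comp_continuousOn hWc).mul hpc).add
      ((hg.continuous_deriv le_rfl).comp_continuousOn hWc)
  obtain ⟨B, hB⟩ := isCompact_Icc.exists_bound_of_continuousOn hcc
  have hn : ∀ s ∈ Icc 0 T, HasDerivWithinAt (fun s => g (W s) + a (W s) * p s)
      ((deriv a (W s) * p s + deriv g (W s)) * (g (W s) + a (W s) * p s)) (Icc 0 T) s :=
    fun s hs => by
      have h1 : HasDerivAt g (deriv g (W s)) (W s) := (hg.differentiable one_ne_zero _).hasDerivAt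
      have h2 : HasDerivAt a (deriv a (W s)) (W s) := (ha.differentiable one_ne_zero _).hasDerivAt
      exact ((h1.comp_hasDerivWithinAt s (hW s hs)).add
        ((h2.comp_hasDerivWithinAt s (hW s hs)).mul (hp s hs))).congr_deriv (by
          simp only [comp]; ring)
  set n0 := g (W 0) + a (W 0) * p 0 with hn0
  have hk : ∀ s ∈ Icc 0 T, HasDerivWithinAt
      (fun s => p 0 * (g (W s) + a (W s) * p s) - n0 * p s)
      ((deriv a (W s) * p s + deriv g (W s)) *
        (p 0 * (g (W s) + a (W s) * p s) - n0 * p s)) (Icc 0 T) s := fun s hs =>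
    (((hn s hs).const_mul (p 0)).sub ((hp s hs).const_mul n0)).congr_deriv (by ring)
  have hk0 := eq_zero_of_gronwall (K := B) hk (fun s hs => by
    rw [abs_mul]
    exact mul_le_mul_of_nonneg_right (hB s hs) (abs_nonneg _)) (by simp only [hn0]; ring) T hTT
  have hgW : ∀ s ∈ Icc 0 T, g (W s) + a (W s) * p s
      = a (W s) * (p s - deriv ub (X s - ψ)) := fun s hs => by
    rw [hWub s hs]; linear_combination hprof (X s - ψ)
  set b0 := |deriv ub (X 0)| with hb0
  have hb0pos : 0 < b0 := abs_pos.mpr (hub' _)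
  have hp0 : b0 / 2 ≤ |p 0| := by
    have h3 := abs_sub_abs_le_abs_sub (deriv ub (X 0)) (p 0)
    rw [abs_sub_comm] at h3
    have : ε0 * b0 ≤ 1 / 2 * b0 := by gcongr
    linarith
  have hp0pos : 0 < |p 0| := by linarith
  have haW : ∀ s ∈ Icc 0 T, a0 ≤ a (W s) ∧ a (W s) ≤ Ab := fun s hs => by
    rw [hWub s hs]; exact ⟨hal _, hab _⟩
  set μ := 2 * Ab * (1 + K * D ^ 2) * ε0 with hμdef
  have hn0μ : |n0| ≤ μ * |p 0| := by
    rw [hn0, hgW 0 h0T, abs_mul, abs_of_pos (ha0.trans_le (haW 0 h0T).1)]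
    have h3 := abs_sub_le (p 0) (deriv ub (X 0)) (deriv ub (X 0 - ψ))
    have h4 := (hmv (X 0)).2.2
    rw [abs_sub_comm] at h4
    have h5 : |p 0 - deriv ub (X 0 - ψ)| ≤ (1 + K * D ^ 2) * ε0 * b0 := by linarith
    have hAb : 0 ≤ Ab := ha0.le.trans ((haW 0 h0T).1.trans (haW 0 h0T).2)
    have hε0 : 0 ≤ ε0 := by
      have := (abs_nonneg ψ).trans hψ
      exact nonneg_of_mul_nonneg_right this hDpos
    calc _ ≤ Ab * ((1 + K * D ^ 2) * ε0 * b0) :=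
          mul_le_mul (haW 0 h0T).2 h5 (abs_nonneg _) hAb
      _ = μ * (b0 / 2) := by rw [hμdef]; ring
      _ ≤ μ * |p 0| := by
        have : 0 ≤ μ := by positivity
        gcongr
  rw [hgW T hTT] at hk0
  set Q := p T - deriv ub (X T - ψ) with hQ
  have h3 : |p 0| * (a (W T) * |Q|) = |n0| * |p T| := by
    rw [← abs_of_pos (ha0.trans_le (haW T hTT).1), ← abs_mul, ← abs_mul, ← abs_mul]
    congr 1; linarith
  have h4 : a0 * |Q| ≤ μ * |p T| := by
    refine le_of_mul_le_mul_left ?_ hp0pos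
    calc |p 0| * (a0 * |Q|) ≤ |p 0| * (a (W T) * |Q|) := by
          have := (haW T hTT).1
          gcongr
      _ ≤ (μ * |p 0|) * |p T| := by rw [h3]; gcongr
      _ = _ := by ring
  have h5 : |p T| ≤ |deriv ub (X T - ψ)| + |Q| := by
    have := abs_add_le (deriv ub (X T - ψ)) Q
    rwa [show deriv ub (X T - ψ) + Q = p T by rw [hQ]; ring] at this
  have hμ0 : 0 ≤ μ := nonneg_of_mul_nonneg_left ((abs_nonneg _).trans hn0μ) hp0pos
  have h6 : a0 / 2 * |Q| ≤ μ * (D * |deriv ub (X T)|) := by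
    have k1 := mul_le_mul_of_nonneg_left h5 hμ0
    have k2 := mul_le_mul_of_nonneg_right hμ (abs_nonneg Q)
    have k3 := mul_le_mul_of_nonneg_left (hmv (X T)).1 hμ0
    linarith
  have h7 : |Q| ≤ 4 * Ab * (1 + K * D ^ 2) * D / a0 * ε0 * |deriv ub (X T)| := by
    rw [div_mul_eq_mul_div, div_mul_eq_mul_div, le_div_iff₀ ha0]
    rw [hμdef] at h6
    linarith
  have h8 := abs_sub_le (p T) (deriv ub (X T - ψ)) (deriv ub (X T))
  linarith [(hmv (X T)).2.2]

/-! ### The pointwise estimate -/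

/-- Truncation of the real line to `[-N, N]`. -/
noncomputable def cut (N v : ℝ) : ℝ := max (-N) (min v N)

lemma cut_eq {N v : ℝ} (h : |v| ≤ N) : cut N v = v := by
  obtain ⟨h1, h2⟩ := abs_le.mp h
  rw [cut, min_eq_left h2, max_eq_right h1]

lemma abs_cut_le {N : ℝ} (hN : 0 ≤ N) (v : ℝ) : |cut N v| ≤ N :=
  abs_le.mpr ⟨le_max_left _ _, max_le (by linarith) (min_le_right _ _)⟩

lemma abs_cut_sub_le (N v w : ℝ) : |cut N v - cut N w| ≤ |v - w| := by
  unfold cut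
  have h1 := abs_max_sub_max_le_max (-N) (min v N) (-N) (min w N)
  have h2 := abs_min_sub_min_le_max v N w N
  simp only [sub_self, abs_zero] at h1 h2
  rw [max_eq_right (abs_nonneg (min v N - min w N))] at h1
  rw [max_eq_left (abs_nonneg _)] at h2
  exact h1.trans h2

/-- A characteristic of the moving frame carries the value and the slope of a classical solution. -/
lemma char_pack {f g u0 : ℝ → ℝ} {u : ℝ → ℝ → ℝ} (hu : IsClassicalSol f g u0 u)
    (hf : ContDiff ℝ 2 (deriv f)) (hg : ContDiff ℝ 2 g) {σ T : ℝ} (hT : 0 ≤ T) {X W : ℝ → ℝ}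
    (hX : ∀ s ∈ Icc 0 T, HasDerivWithinAt X (-(σ - deriv f (W s))) (Icc 0 T) s)
    (hW : ∀ s ∈ Icc 0 T, HasDerivWithinAt W (g (W s)) (Icc 0 T) s)
    (h0 : W 0 = u0 (X 0)) :
    ∃ p : ℝ → ℝ, p 0 = deriv u0 (X 0) ∧ u T (X T + σ * T) = W T ∧
      HasDerivAt (u T) (p T) (X T + σ * T) ∧
      ∀ s ∈ Icc 0 T, HasDerivWithinAt p
        ((deriv (fun v => σ - deriv f v) (W s) * p s + deriv g (W s)) * p s) (Icc 0 T) s := by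
  have hY : ∀ s ∈ Icc 0 T, HasDerivWithinAt (fun s => X s + σ * s) (deriv f (W s)) (Icc 0 T) s :=
    fun s hs => ((hX s hs).add ((hasDerivWithinAt_id s _).const_mul σ)).congr_deriv (by ring)
  have huW := char_value hu (hf.of_le one_le_two) (hg.of_le one_le_two) hY hW (by simpa using h0)
  obtain ⟨p, hp1, hp2⟩ := char_deriv hu (hf.of_le one_le_two) (hg.of_le one_le_two) hY hW huW
  have h0T : (0:ℝ) ∈ Icc 0 T := ⟨le_rfl, hT⟩
  have hTT : T ∈ Icc 0 T := ⟨hT, le_rfl⟩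
  refine ⟨p, ?_, huW T hTT, hp1 T hTT, fun s hs => (hp2 s hs).congr_deriv ?_⟩
  · have h1 := hp1 0 h0T
    rw [show u 0 = u0 from funext hu.2.1] at h1
    simpa using h1.deriv.symm
  · rw [deriv_const_sub]

set_option maxHeartbeats 1000000 in
/-- Pointwise stability estimate. Either the characteristic through `(t, x)` starts from the rear
region, where perturbations decay exponentially in time, or the perturbation at time `t` is
controlled, relatively to `|ub'(x)|`, by the initial perturbation at a foot `x0` located at distance
at least `a0 t` to the right of `x`. -/
lemma pointwise {f g ub : ℝ → ℝ} {σ um κ a0 K : ℝ} (hf : ContDiff ℝ 2 (deriv f))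
    (hg : ContDiff ℝ 2 g) (hub : ContDiff ℝ 2 ub) (hub' : ∀ x, deriv ub x ≠ 0)
    (hubbd : ∃ M, ∀ x, |ub x| ≤ M)
    (hprof : ∀ x, (σ - deriv f (ub x)) * deriv ub x = -g (ub x))
    (hlm : Tendsto ub atBot (nhds um)) (hgum : g um = 0) (hg'um : deriv g um < 0)
    (ha0 : 0 < a0) (hK : 0 < K) (haum : 0 < σ - deriv f um)
    (hκ : 0 < κ)
    (hal : ∀ x, a0 ≤ σ - deriv f (ub x)) (hK1 : ∀ x, |deriv ub x| ≤ K)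
    (hharn : ∀ x y, |deriv ub y| ≤ Real.exp (K * |y - x|) * |deriv ub x|)
    (h2 : ∀ x, |deriv (deriv ub) x| ≤ K * |deriv ub x|)
    (hlow : ∀ R, ∃ cR > 0, ∀ x, -R ≤ x → cR * Real.exp (-(κ * max x 0)) ≤ |deriv ub x|)
    (hd0 : Tendsto (deriv ub) atBot (nhds 0)) :
    ∃ δ0 > 0, ∃ C > 0, ∃ c > 0, ∀ u0 : ℝ → ℝ, ∀ u : ℝ → ℝ → ℝ,
      (∀ x, |u0 x - ub x| ≤ δ0 * Real.exp (-(κ * max x 0))) →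
      (∀ x, |deriv u0 x - deriv ub x| ≤ δ0 * Real.exp (-(κ * max x 0))) →
      IsClassicalSol f g u0 u → ∀ t, 0 ≤ t → ∀ x, ∃ x0 p, HasDerivAt (u t) p (x + σ * t) ∧
        ((x ≤ 0 ∧ x0 ≤ 0 ∧ max |u t (x + σ * t) - ub x| |p - deriv ub x| ≤
            C * max |u0 x0 - ub x0| |deriv u0 x0 - deriv ub x0| * Real.exp (-c * t)) ∨
          (x ≤ x0 - a0 * t ∧ max |u t (x + σ * t) - ub x| |p - deriv ub x| ≤
            C * (max |u0 x0 - ub x0| |deriv u0 x0 - deriv ub x0| * Real.exp (κ * max x0 0))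
              * |deriv ub x|)) := by
  set a : ℝ → ℝ := fun v => σ - deriv f v with hadef
  have ha2 : ContDiff ℝ 2 a := contDiff_const.sub hf
  have ha : ContDiff ℝ 1 a := ha2.of_le one_le_two
  have hg1 : ContDiff ℝ 1 g := hg.of_le one_le_two
  obtain ⟨M, hM⟩ := hubbd
  have hM0 : 0 ≤ M := (abs_nonneg _).trans (hM 0)
  have humM : |um| ≤ M := le_of_tendsto' hlm.abs hM
  set N := M + 1 with hN
  have hN0 : 0 ≤ N := by linarith
  obtain ⟨La0, hLa00, hLa0⟩ := exists_lip ha N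
  obtain ⟨Lg, hLg0, hLg⟩ := exists_lip hg1 N
  obtain ⟨Ba, hBa0, hBa⟩ := exists_bdd ha.continuous N
  obtain ⟨Bg, hBg0, hBg⟩ := exists_bdd hg1.continuous N
  obtain ⟨Ba', hBa'0, hBa'⟩ := exists_bdd (ha.continuous_deriv le_rfl) N
  set La := max La0 Ba' with hLadef
  have hLa_nn : 0 ≤ La := hLa00.trans (le_max_left _ _)
  have hLa : ∀ v w, |v| ≤ N → |w| ≤ N → |a v - a w| ≤ La * |v - w| := fun v w hv hw =>
    (hLa0 v w hv hw).trans (mul_le_mul_of_nonneg_right (le_max_left _ _) (abs_nonneg _))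
  have hcutL : ∀ {h : ℝ → ℝ} {L : ℝ}, 0 ≤ L →
      (∀ v w, |v| ≤ N → |w| ≤ N → |h v - h w| ≤ L * |v - w|) →
      ∀ v w, |h (cut N v) - h (cut N w)| ≤ L * |v - w| := fun hL hh v w =>
    (hh _ _ (abs_cut_le hN0 v) (abs_cut_le hN0 w)).trans
      (mul_le_mul_of_nonneg_left (abs_cut_sub_le N v w) hL)
  have hAL := hcutL hLa_nn hLa
  have hGL := hcutL hLg0 hLg
  -- neighbourhood of the stable state on which `g` is strictly decreasing and `a` is positive
  set c1 := -deriv g um / 6 with hc1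
  have hc1pos : 0 < c1 := by rw [hc1]; linarith
  obtain ⟨η1, hη1, hball⟩ := Metric.eventually_nhds_iff.mp
    ((((hg.continuous_deriv one_le_two).tendsto um).eventually_lt_const
      (show deriv g um < -(3 * c1) by rw [hc1]; linarith)).and
      ((ha.continuous.tendsto um).eventually_const_lt (show a um / 2 < a um by
        have : 0 < a um := haum
        linarith)))
  set η := min (η1 / 2) 1 with hη
  have hηpos : 0 < η := by positivity
  have hη1' : η ≤ 1 := min_le_right _ _
  have hηball : ∀ v, |v - um| ≤ η → deriv g v ≤ -(3 * c1) ∧ a um / 2 ≤ a v := fun v hv => by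
    have h1 : η ≤ η1 / 2 := min_le_left _ _
    have := hball (y := v) (by rw [Real.dist_eq]; linarith)
    exact ⟨this.1.le, this.2.le⟩
  have hηN : ∀ v, |v - um| ≤ η → |v| ≤ N := fun v hv => by
    have := abs_add_le (v - um) um
    rw [sub_add_cancel] at this
    linarith
  have hgm1 : ∀ v w, |v - um| ≤ η → |w - um| ≤ η → w ≤ v → g v - g w ≤ -(3 * c1) * (v - w) := by
    intro v w hv hw hwv
    refine (convex_Icc (um - η) (um + η)).image_sub_le_mul_sub_of_deriv_le
      hg1.continuous.continuousOn (hg1.differentiable one_ne_zero).differentiableOn (fun z hz => ?_)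
      w ?_ v ?_ hwv
    · have hz' := interior_subset hz
      exact (hηball z (abs_le.mpr ⟨by linarith [hz'.1], by linarith [hz'.2]⟩)).1
    · have := abs_le.mp hw
      exact ⟨by linarith, by linarith⟩
    · have := abs_le.mp hv
      exact ⟨by linarith, by linarith⟩
  have hgm : ∀ v w, |v - um| ≤ η → |w - um| ≤ η →
      (v - w) * (g v - g w) ≤ -(3 * c1) * (v - w) ^ 2 := by
    intro v w hv hw
    rcases le_total w v with h | h
    · have := mul_le_mul_of_nonneg_left (hgm1 v w hv hw h) (sub_nonneg.mpr h)
      linarith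
    · have := mul_le_mul_of_nonneg_left (hgm1 w v hw hv h) (sub_nonneg.mpr h)
      linarith
  set ε := c1 / (La + 1) with hε
  have hεpos : 0 < ε := by positivity
  have hLε : La * ε ≤ c1 := by
    rw [hε, mul_div_assoc', div_le_iff₀ (by positivity)]
    nlinarith
  -- rear region, where the front is in that neighbourhood and is nearly flat
  have hev1 : ∀ᶠ x in atBot, |ub x - um| < η / 2 := by
    have : Tendsto (fun x => |ub x - um|) atBot (nhds |um - um|) := (hlm.sub_const um).abs
    rw [sub_self, abs_zero] at this
    exact this.eventually_lt_const (by positivity)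
  have hev2 : ∀ᶠ x in atBot, |deriv ub x| < ε / 2 := by
    have := hd0.abs
    rw [abs_zero] at this
    exact this.eventually_lt_const (by positivity)
  obtain ⟨Rr, hRr⟩ := eventually_atBot.mp (hev1.and hev2)
  set R := max (-Rr) 0 with hR
  have hR0 : 0 ≤ R := le_max_right _ _
  have hRear : ∀ x ≤ -R, |ub x - um| < η / 2 ∧ |deriv ub x| < ε / 2 := fun x hx =>
    hRr x (by linarith [le_max_left (-Rr) 0])
  obtain ⟨cR, hcR, hlowR⟩ := hlow R
  have hab : ∀ v, |v| ≤ N → a v ≤ Ba := fun v hv => (le_abs_self _).trans (hBa v hv)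
  have hubN : ∀ x, |ub x| ≤ N := fun x => (hM x).trans (by linarith)
  have hBapos : 0 < Ba := ha0.trans_le ((hal 0).trans (hab _ (hubN 0)))
  set D := Real.exp K with hD
  have hDpos : 0 < D := Real.exp_pos K
  set Z := 2 * Ba * (1 + K * D ^ 2) with hZ
  have hZpos : 0 < Z := by positivity
  -- smallness of the perturbation relative to `|ub'|` required by `exists_shift` and
  -- `front_transport`
  set ε1 := min (min (Real.exp (-K)) (1 / 2)) (a0 / 2 / Z) with hε1
  have hε1pos : 0 < ε1 := by
    have := Real.exp_pos (-K)
    positivity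
  set C1 := (2 * (Lg + c1) + Ba) / (a um / 2) with hC1
  set C2 := 4 * Ba * (1 + K * D ^ 2) * D / a0 + K * D ^ 2 with hC2
  have haum' : 0 < a um := haum
  have hC1pos : 0 < C1 := by positivity
  have hC2pos : 0 < C2 := by positivity
  refine ⟨min (min (η / 4) (ε / 4)) (cR * ε1), by positivity, 1 + C1 + (C2 + D ^ 2) / cR,
    by positivity, c1, hc1pos, ?_⟩
  set δ0 := min (min (η / 4) (ε / 4)) (cR * ε1) with hδ0
  have hδη : δ0 ≤ η / 4 := (min_le_left _ _).trans (min_le_left _ _)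
  have hδε : δ0 ≤ ε / 4 := (min_le_left _ _).trans (min_le_right _ _)
  have hδR : δ0 ≤ cR * ε1 := min_le_right _ _
  have hδpos : 0 < δ0 := by positivity
  intro u0 u hv0 hq0 hu t ht x
  have hu0c : Continuous u0 := by
    have h1 : ContinuousOn (fun y : ℝ => uncurry u (0, y)) univ :=
      hu.1.continuousOn.comp (by fun_prop) (fun y _ => ⟨mem_Ici.mpr le_rfl, mem_univ _⟩)
    rw [continuousOn_univ] at h1
    exact h1.congr fun y => hu.2.1 y
  obtain ⟨X, W, hW0, hXt, hX, hW⟩ := exists_flow (A := fun v => a (cut N v))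
    (G := fun v => g (cut N v)) (L := max La Lg) (M := max Ba Bg)
    (fun v w => (hAL v w).trans (mul_le_mul_of_nonneg_right (le_max_left _ _) (abs_nonneg _)))
    (fun v w => (hGL v w).trans (mul_le_mul_of_nonneg_right (le_max_right _ _) (abs_nonneg _)))
    (fun v => (hBa _ (abs_cut_le hN0 v)).trans (le_max_left _ _))
    (fun v => (hBg _ (abs_cut_le hN0 v)).trans (le_max_right _ _)) hu0c ht x
  have h0t : (0:ℝ) ∈ Icc 0 t := ⟨le_rfl, ht⟩
  have htt : t ∈ Icc 0 t := ⟨ht, le_rfl⟩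
  -- the truncation is inactive as long as the characteristic stays in `[-N, N]`
  have hinact : (∀ s ∈ Icc 0 t, |W s| ≤ N) →
      (∀ s ∈ Icc 0 t, HasDerivWithinAt X (-a (W s)) (Icc 0 t) s) ∧
      (∀ s ∈ Icc 0 t, HasDerivWithinAt W (g (W s)) (Icc 0 t) s) := fun hWN =>
    ⟨fun s hs => (hX s hs).congr_deriv (by rw [cut_eq (hWN s hs)]),
      fun s hs => (hW s hs).congr_deriv (by rw [cut_eq (hWN s hs)])⟩
  set x0 := X 0 with hx0
  set e0 := max |u0 x0 - ub x0| |deriv u0 x0 - deriv ub x0| with he0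
  have he0nn : 0 ≤ e0 := (abs_nonneg _).trans (le_max_left _ _)
  have hexp1 : Real.exp (-(κ * max x0 0)) ≤ 1 := Real.exp_le_one_iff.mpr (by
    have := mul_nonneg hκ.le (le_max_right x0 0); linarith)
  have he0δ : e0 ≤ δ0 * Real.exp (-(κ * max x0 0)) := max_le (hv0 x0) (hq0 x0)
  have he0δ' : e0 ≤ δ0 := he0δ.trans (mul_le_of_le_one_right hδpos.le hexp1)
  -- the foot `x0` lies either in the rear region or on the half-line `[-R, ∞)`
  rcases le_total x0 (-R) with hcase | hcase
  · obtain ⟨hr1, hr2⟩ := hRear x0 hcase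
    have hW0η : |W 0 - um| < η := by
      rw [hW0]
      have := abs_sub_le (u0 x0) (ub x0) um
      linarith [le_max_left |u0 x0 - ub x0| |deriv u0 x0 - deriv ub x0|]
    have hWη : ∀ s ∈ Icc 0 t, |W s - um| ≤ η := by
      have := decay (y := fun s => W s - um) (c := 3 * c1) (ε := η) (by linarith)
        (fun s hs => (hW s hs).sub_const um) (fun s hs hsη => by
          rw [cut_eq (hηN _ hsη)]
          have := hgm (W s) um hsη (by rw [sub_self, abs_zero]; exact hηpos.le)
          rwa [hgum, sub_zero] at this) hW0η
      intro s hs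
      have h1 : Real.exp (-(3 * c1 / 2) * s) ≤ 1 := Real.exp_le_one_iff.mpr (by nlinarith [hs.1])
      exact (this s hs).trans ((mul_le_of_le_one_right (abs_nonneg _) h1).trans hW0η.le)
    obtain ⟨hX', hW'⟩ := hinact fun s hs => hηN _ (hWη s hs)
    obtain ⟨p, hp0, huW, hpd, hp⟩ := char_pack hu hf hg ht hX' hW' hW0
    rw [hXt] at huW hpd
    have hq0' : |p 0 - deriv ub x0| ≤ e0 := by rw [hp0]; exact le_max_right _ _
    have hp0ε : |p 0| < ε := by
      have := abs_add_le (p 0 - deriv ub x0) (deriv ub x0)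
      rw [sub_add_cancel] at this
      linarith
    obtain ⟨k1, k2⟩ := rear_decay ha hg1 (hub.of_le one_le_two) hprof hc1pos (half_pos haum')
      hLa_nn hLg0 hgm (fun v hv => (hηball v hv).1) (fun v w hv hw => hLa v w (hηN v hv) (hηN w hw))
      (fun v w hv hw => hLg v w (hηN v hv) (hηN w hw))
      (fun v hv => (hBa' v (hηN v hv)).trans (le_max_right _ _))
      (fun v hv => (hηball v hv).2) (fun v hv => hab v (hηN v hv)) hLε
      (fun y hy => ⟨by linarith [(hRear y hy).1], by linarith [(hRear y hy).2]⟩)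
      ht hX' hW' hp hWη hcase hp0ε (by rw [hW0]; exact le_max_left _ _) hq0'
    rw [hXt] at k1 k2
    rw [← hC1] at k2
    have hxx0 : x ≤ x0 := by
      have hanti : AntitoneOn X (Icc 0 t) := by
        refine antitoneOn_of_hasDerivWithinAt_nonpos (convex_Icc 0 t)
          (fun s hs => (hX' s hs).continuousWithinAt)
          (fun s hs => (hX' s (interior_subset hs)).mono interior_subset) (fun s hs => ?_)
        linarith [(hηball _ (hWη s (interior_subset hs))).2]
      exact hXt ▸ hanti h0t htt ht
    refine ⟨x0, p t, hpd, Or.inl ⟨by linarith, by linarith, ?_⟩⟩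
    rw [huW]
    have hE := mul_nonneg he0nn (Real.exp_pos (-c1 * t)).le
    have hrest : 0 ≤ (C2 + D ^ 2) / cR * (e0 * Real.exp (-c1 * t)) := by positivity
    have hrest1 : 0 ≤ C1 * (e0 * Real.exp (-c1 * t)) := by positivity
    rw [← he0]
    exact max_le (by linarith) (by linarith)
  · set b0 := |deriv ub x0| with hb0
    have hb0pos : 0 < b0 := abs_pos.mpr (hub' x0)
    set ε0 := e0 / b0 with hε0
    have hε0b : ε0 * b0 = e0 := div_mul_cancel₀ _ hb0pos.ne'
    have hε0nn : 0 ≤ ε0 := by positivity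
    have hε0ε1 : ε0 ≤ ε1 := by
      rw [hε0, div_le_iff₀ hb0pos]
      calc e0 ≤ δ0 * Real.exp (-(κ * max x0 0)) := he0δ
        _ ≤ (cR * ε1) * Real.exp (-(κ * max x0 0)) := by gcongr
        _ = ε1 * (cR * Real.exp (-(κ * max x0 0))) := by ring
        _ ≤ ε1 * b0 := mul_le_mul_of_nonneg_left (hlowR x0 hcase) hε1pos.le
    have hε0K : ε0 ≤ Real.exp (-K) := hε0ε1.trans ((min_le_left _ _).trans (min_le_left _ _))
    have hε0h : ε0 ≤ 1 / 2 := hε0ε1.trans ((min_le_left _ _).trans (min_le_right _ _))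
    have hε0Z : Z * ε0 ≤ a0 / 2 := by
      have := hε0ε1.trans (min_le_right _ _)
      rwa [le_div_iff₀ hZpos, mul_comm] at this
    obtain ⟨ψ, hψ, hψ1, hψu⟩ := exists_shift (hub.of_le one_le_two) hub' hK hharn (w := u0 x0) hε0K
      (by rw [← hb0, hε0b]; exact le_max_left _ _)
    have hWub := shift_lock (ψ := ψ) (hub.of_le one_le_two)
      (fun y => by rw [cut_eq (hubN y)]; exact hprof y) hLa_nn hAL hGL hK1 hX hW
      (by rw [hW0, hψu])
    obtain ⟨hX', hW'⟩ := hinact fun s hs => by rw [hWub s hs]; exact hubN _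
    obtain ⟨p, hp0, huW, hpd, hp⟩ := char_pack hu hf hg ht hX' hW' hW0
    rw [hXt] at huW hpd
    obtain ⟨k1, k2, k3⟩ := front_transport ha hg1 hub hub' hprof ha0 hK hal
      (fun y => hab _ (hubN y)) hharn h2 ht hX' hW' hp hWub hψ hψ1
      (by rw [hp0, ← hx0, ← hb0, hε0b]; exact le_max_right _ _) hε0h hε0Z
    rw [hXt] at k1 k2 k3
    refine ⟨x0, p t, hpd, Or.inr ⟨k1, ?_⟩⟩
    rw [huW]
    have hε0e : ε0 ≤ e0 * Real.exp (κ * max x0 0) / cR := by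
      have h1 := hlowR x0 hcase
      rw [Real.exp_neg] at h1
      have h2 : cR ≤ b0 * Real.exp (κ * max x0 0) := by
        rwa [← div_eq_mul_inv, div_le_iff₀ (Real.exp_pos _)] at h1
      rw [hε0, div_le_div_iff₀ hb0pos hcR]
      calc e0 * cR ≤ e0 * (b0 * Real.exp (κ * max x0 0)) := by gcongr
        _ = _ := by ring
    have hgen : ∀ Cc, 0 ≤ Cc → Cc ≤ C2 + D ^ 2 → Cc * ε0 * |deriv ub x| ≤
        (1 + C1 + (C2 + D ^ 2) / cR) * (e0 * Real.exp (κ * max x0 0)) * |deriv ub x| := by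
      intro Cc hCc hCc'
      refine mul_le_mul_of_nonneg_right ?_ (abs_nonneg _)
      have h3 : 0 ≤ e0 * Real.exp (κ * max x0 0) := by positivity
      calc Cc * ε0 ≤ (C2 + D ^ 2) * (e0 * Real.exp (κ * max x0 0) / cR) := by gcongr
        _ = (C2 + D ^ 2) / cR * (e0 * Real.exp (κ * max x0 0)) := by ring
        _ ≤ _ := by gcongr; linarith
    exact max_le (k2.trans (hgen _ (by positivity) (by linarith)))
      (k3.trans (hgen _ hC2pos.le (by linarith [sq_nonneg D])))

/-! ### Conversion of localization into decay -/

/-- **Algebraic-in-time convective stability of smooth non-characteristic monostable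
fronts at the critical exponential weight** (Theorem "fronts", part 2): if the initial
perturbation is additionally localized as `ρ(x₊)·exp(−κ⁺ x₊)` for a sub-exponential
weight `ρ`, then the perturbation decays in `W^{1,∞}_{κ⁺,+}` at rate `ρ(θ_ρ t)`. -/
theorem stmt_2
    (f g : ℝ → ℝ) (hf : ContDiff ℝ (⊤ : ℕ∞) f) (hg : ContDiff ℝ (⊤ : ℕ∞) g)
    (σ : ℝ) (ub : ℝ → ℝ) (hub : ContDiff ℝ (⊤ : ℕ∞) ub)
    (hubbd : ∃ M, ∀ x, |ub x| ≤ M)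
    (hub' : ∀ x, deriv ub x ≠ 0)
    (hnc : ∀ x, deriv f (ub x) ≠ σ)
    (hprof : ∀ x, (deriv f (ub x) - σ) * deriv ub x = g (ub x))
    (um up : ℝ)
    (hlm : Tendsto ub atBot (nhds um)) (hlp : Tendsto ub atTop (nhds up))
    (hgum : g um = 0) (hgup : g up = 0)
    (hg'um : deriv g um < 0) (hg'up : 0 < deriv g up)
    (hfum : deriv f um ≠ σ) (hfup : deriv f up ≠ σ)
    (κp : ℝ) (hκp : κp = deriv g up / |deriv f up - σ|) :
    ∃ δ0 > (0:ℝ), ∀ ρ : ℝ → ℝ, IsSubExpWeight ρ →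
      ∃ Cρ > (0:ℝ), ∃ θρ > (0:ℝ),
        ∀ u0 : ℝ → ℝ, ContDiff ℝ 1 u0 →
          IsBUC (fun x => (u0 x - ub x) / Real.exp (-(κp * max x 0))) →
          IsBUC (fun x => deriv (fun y => u0 y - ub y) x / Real.exp (-(κp * max x 0))) →
          wNorm κp (fun x => u0 x - ub x) ≤ δ0 →
          BddAbove (Set.range fun x =>
            max |u0 x - ub x| |deriv (fun y => u0 y - ub y) x|
              / (ρ (max x 0) * Real.exp (-(κp * max x 0)))) →
          ∀ u : ℝ → ℝ → ℝ, IsClassicalSol f g u0 u →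
            ∀ t, 0 ≤ t →
              wNorm κp (fun x => u t (x + σ * t) - ub x)
                ≤ Cρ * wNormW κp ρ (fun x => u0 x - ub x) * ρ (θρ * t) := by
  have hf1 : ContDiff ℝ 2 (deriv f) :=
    contDiff_infty.mp (contDiff_infty_iff_deriv.mp hf).2 2
  have hg2 : ContDiff ℝ 2 g := contDiff_infty.mp hg 2
  have hub2 : ContDiff ℝ 2 ub := contDiff_infty.mp hub 2
  have hprof' : ∀ x, (σ - deriv f (ub x)) * deriv ub x = -g (ub x) := fun x => by
    linear_combination -hprof x
  obtain ⟨a0, ha0, K, hK, Cu, hCu, cm, hcm, hκ, haum, hal, hK1, hharn, h2, hup, hrear, hlow, hd0⟩ :=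
    front_bounds (a := fun v => σ - deriv f v) ((contDiff_const.sub hf1).of_le one_le_two) hg2 hub2
      hub' (fun x => sub_ne_zero.mpr (hnc x).symm) hprof' hlm hlp hgum hgup hg'um hg'up
      (sub_ne_zero.mpr hfum.symm) (sub_ne_zero.mpr hfup.symm) (κ := κp)
      (by rw [hκp, abs_sub_comm])
  obtain ⟨δ0, hδ0, C, hC, c, hc, hmain⟩ := pointwise hf1 hg2 hub2 hub' hubbd hprof' hlm hgum hg'um
    ha0 hK haum hκ hal hK1 hharn h2 hlow hd0
  refine ⟨δ0, hδ0, fun ρ hρ => ?_⟩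
  obtain ⟨hρpos, hρanti, -, ⟨Cw, hCw, ω, hω, hρlow⟩, -⟩ := hρ
  have hρ0 : 0 < ρ 0 := hρpos 0 le_rfl
  -- every exponential rate at least `ω θ` is absorbed by the weight `ρ (θ t)`
  set c' := min c (cm * a0 / 2) with hc'
  have hc'pos : 0 < c' := by positivity
  set θ := min (a0 / 2) (c' / ω) with hθ
  have hθpos : 0 < θ := by positivity
  have hθω : ω * θ ≤ c' := by
    have := mul_le_mul_of_nonneg_left (min_le_right (a0 / 2) (c' / ω)) hω.le
    rwa [mul_div_cancel₀ _ hω.ne'] at this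
  refine ⟨C * (ρ 0 / Cw) + C * Cu + C * Cu * (ρ 0 / Cw), by positivity, θ, hθpos, ?_⟩
  intro u0 hu0 hbuc hbuc' hsmall hbdd u hu t ht
  have hderiv : ∀ x, deriv (fun y => u0 y - ub y) x = deriv u0 x - deriv ub x := fun x =>
    deriv_fun_sub (hu0.differentiable one_ne_zero x) (hub2.differentiable two_ne_zero x)
  have hbdd1 : BddAbove (range fun x => max |u0 x - ub x| |deriv (fun y => u0 y - ub y) x|
      / Real.exp (-(κp * max x 0))) := by
    obtain ⟨M1, hM1⟩ := hbuc.1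
    obtain ⟨M2, hM2⟩ := hbuc'.1
    refine ⟨max M1 M2, ?_⟩
    rintro _ ⟨x, rfl⟩
    have h1 := hM1 x
    have h2 := hM2 x
    have hE := Real.exp_pos (-(κp * max x 0))
    rw [abs_div, abs_of_pos hE] at h1 h2
    simp only
    rw [← max_div_div_right hE.le]
    exact max_le_max h1 h2
  have hsm : ∀ x, max |u0 x - ub x| |deriv (fun y => u0 y - ub y) x|
      ≤ δ0 * Real.exp (-(κp * max x 0)) := fun x => by
    rw [← div_le_iff₀ (Real.exp_pos _)]
    exact (le_ciSup hbdd1 x).trans hsmall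
  set E := wNormW κp ρ (fun x => u0 x - ub x) with hEdef
  have hE : ∀ x, max |u0 x - ub x| |deriv u0 x - deriv ub x|
      ≤ E * (ρ (max x 0) * Real.exp (-(κp * max x 0))) := fun x => by
    rw [← div_le_iff₀ (mul_pos (hρpos _ (le_max_right _ _)) (Real.exp_pos _)), ← hderiv]
    exact le_ciSup hbdd x
  have hE0 : 0 ≤ E := by
    have h1 := ((abs_nonneg _).trans (le_max_left _ _)).trans (hE 0)
    exact nonneg_of_mul_nonneg_left h1 (mul_pos (hρpos _ (le_max_right _ _)) (Real.exp_pos _))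
  have hθt : 0 ≤ θ * t := by positivity
  have hρt := hρpos _ hθt
  have hexp : ∀ r, c' ≤ r → Real.exp (-r * t) ≤ ρ (θ * t) / Cw := fun r hr => by
    rw [le_div_iff₀ hCw, mul_comm]
    refine le_trans ?_ (hρlow _ hθt)
    have : ω * θ * t ≤ r * t := by gcongr; linarith
    exact mul_le_mul_of_nonneg_left (Real.exp_le_exp.mpr (by linarith)) hCw.le
  have hT1 : 0 ≤ C * (ρ 0 / Cw) * E * ρ (θ * t) := by positivity
  have hT2 : 0 ≤ C * Cu * E * ρ (θ * t) := by positivity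
  have hT3 : 0 ≤ C * Cu * (ρ 0 / Cw) * E * ρ (θ * t) := by positivity
  refine ciSup_le fun x => ?_
  obtain ⟨x0, p, hp, hcase⟩ := hmain u0 u (fun y => (le_max_left _ _).trans (hsm y))
    (fun y => by rw [← hderiv]; exact (le_max_right _ _).trans (hsm y)) hu t ht x
  have hdx : deriv (fun y => u t (y + σ * t) - ub y) x = p - deriv ub x :=
    ((hp.comp_add_const x (σ * t)).sub (hub2.differentiable two_ne_zero x).hasDerivAt).deriv
  rw [div_le_iff₀ (Real.exp_pos _), hdx]
  rcases hcase with ⟨hx, hx0, hb⟩ | ⟨hxx0, hb⟩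
  · have h1 := hE x0
    rw [max_eq_right hx0, mul_zero, neg_zero, Real.exp_zero, mul_one] at h1
    rw [max_eq_right hx, mul_zero, neg_zero, Real.exp_zero, mul_one]
    calc _ ≤ _ := hb
      _ ≤ C * (E * ρ 0) * (ρ (θ * t) / Cw) := by
        gcongr
        exact hexp c (min_le_left _ _)
      _ = C * (ρ 0 / Cw) * E * ρ (θ * t) := by ring
      _ ≤ _ := by linarith
  · have h1 : max |u0 x0 - ub x0| |deriv u0 x0 - deriv ub x0| * Real.exp (κp * max x0 0)
        ≤ E * ρ (max x0 0) := by
      have := mul_le_mul_of_nonneg_right (hE x0) (Real.exp_pos (κp * max x0 0)).le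
      have e : Real.exp (-(κp * max x0 0)) * Real.exp (κp * max x0 0) = 1 := by
        rw [← Real.exp_add]; simp
      linear_combination this + E * ρ (max x0 0) * e
    have hρx0 := hρpos _ (le_max_right x0 0)
    have h3 := hb.trans (mul_le_mul_of_nonneg_right (mul_le_mul_of_nonneg_left h1 hC.le)
      (abs_nonneg (deriv ub x)))
    refine h3.trans ?_
    rcases le_total (-(a0 * t / 2)) x with hx | hx
    · -- the foot of the characteristic is far ahead of the front: the weight has decayed
      have h4 : ρ (max x0 0) ≤ ρ (θ * t) := by
        refine hρanti _ _ hθt (le_max_of_le_left ?_)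
        have : θ * t ≤ a0 / 2 * t := mul_le_mul_of_nonneg_right (min_le_left _ _) ht
        linarith
      calc C * (E * ρ (max x0 0)) * |deriv ub x|
          ≤ C * (E * ρ (θ * t)) * (Cu * Real.exp (-(κp * max x 0))) := by
            gcongr
            exact hup x
        _ = (C * Cu * E * ρ (θ * t)) * Real.exp (-(κp * max x 0)) := by ring
        _ ≤ _ := mul_le_mul_of_nonneg_right (by linarith) (Real.exp_pos _).le
    · -- the point is far behind the front: `ub'` is exponentially small
      have hx0 : x ≤ 0 := by
        have : 0 ≤ a0 * t := by positivity
        linarith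
      have h4 : |deriv ub x| ≤ Cu * (ρ (θ * t) / Cw) := by
        refine (hrear x hx0).trans (mul_le_mul_of_nonneg_left ?_ hCu.le)
        refine le_trans (Real.exp_le_exp.mpr ?_) (hexp (cm * a0 / 2) (min_le_right _ _))
        have := mul_le_mul_of_nonneg_left hx hcm.le
        linarith
      have h5 : ρ (max x0 0) ≤ ρ 0 := hρanti _ _ le_rfl (le_max_right _ _)
      rw [max_eq_right hx0, mul_zero, neg_zero, Real.exp_zero, mul_one]
      calc C * (E * ρ (max x0 0)) * |deriv ub x| ≤ C * (E * ρ 0) * (Cu * (ρ (θ * t) / Cw)) := by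
            gcongr
        _ = C * Cu * (ρ 0 / Cw) * E * ρ (θ * t) := by ring
        _ ≤ _ := by linarith
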